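/- Let f be a homeomorphism of the open annulus 𝔸 isotopic to the identity and satisfying the intersection property, and let F be a lift of f to ℝ². Assume that the weak rotation set Rot_weak(F) is contained in a Farey interval ]p/q, p'/q'[. Then there exists an essential line γ in 𝔸 such that the lines γ, f(γ), …, f^{q+q'−1}(γ) are pairwise disjoint; moreover, the cyclic order of these lines in 𝔸 is the same as the cyclic order of the q+q'−1 first iterates of a vertical line {θ}×ℝ under the rigid rotation of angle ρ, for any ρ ∈ ]p/q, p'/q'[. -/

import Mathlib

open Filter Topology Set

noncomputable section

/-- The plane ℝ². -/
abbrev Plane := ℝ × ℝ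

/-- The open annulus 𝔸 = ℝ/ℤ × ℝ. -/
abbrev Ann := AddCircle (1 : ℝ) × ℝ

/-- The covering map π : ℝ² → 𝔸, (x,y) ↦ (x + ℤ, y). -/
def prj : Plane → Ann := fun p => ((p.1 : AddCircle (1 : ℝ)), p.2)

/-- The deck transformation T^k : ℝ² → ℝ², (x,y) ↦ (x + k, y). -/
def Tr (k : ℤ) : Plane → Plane := fun p => (p.1 + (k : ℝ), p.2)

/-- `F` is a lift of `f` to the universal cover ℝ² of the annulus. -/
def IsLift (f : Ann ≃ₜ Ann) (F : Plane ≃ₜ Plane) : Prop :=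
  ∀ p : Plane, prj (F p) = f (prj p)

/-- `f` is isotopic to the identity: there is a continuous family of homeomorphisms
joining the identity to `f`. -/
def IsotopicToId (f : Ann ≃ₜ Ann) : Prop :=
  ∃ H : ℝ → Ann → Ann,
    Continuous (fun q : ℝ × Ann => H q.1 q.2) ∧
    (∀ t : ℝ, ∃ h : Ann ≃ₜ Ann, ∀ z, H t z = h z) ∧
    (∀ z, H 0 z = z) ∧ (∀ z, H 1 z = f z)

/-- An essential circle in 𝔸: a simple closed curve which is not null-homotopic. -/
def IsEssentialCircle (c : Set Ann) : Prop :=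
  ∃ φ : C(AddCircle (1 : ℝ), Ann), Function.Injective φ ∧ Set.range φ = c ∧
    ¬ ∃ pt : Ann, φ.Homotopic (ContinuousMap.const _ pt)

/-- `f` has the intersection property: every essential circle meets its image. -/
def IntersectionProperty (f : Ann → Ann) : Prop :=
  ∀ c : Set Ann, IsEssentialCircle c → (c ∩ f '' c).Nonempty

/-- `z` is a positively recurrent point of `g`: some subsequence of the forward orbit
of `z` converges to `z`. -/
def PosRec {X : Type*} [TopologicalSpace X] (g : X → X) (z : X) : Prop :=
  ∃ φ : ℕ → ℕ, StrictMono φ ∧ Tendsto (fun k => g^[φ k] z) atTop (𝓝 z)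

/-- The positively recurrent point `z` has rotation number `ρ` for the lift `F` of `f`. -/
def HasRotNum (f : Ann → Ann) (F : Plane → Plane) (z : Ann) (ρ : ℝ) : Prop :=
  PosRec f z ∧
    ∀ zt : Plane, prj zt = z →
      ∀ φ : ℕ → ℕ, StrictMono φ →
        Tendsto (fun k => f^[φ k] z) atTop (𝓝 z) →
        Tendsto (fun k => ((F^[φ k] zt).1 - zt.1) / (φ k : ℝ)) atTop (𝓝 ρ)

/-- The rotation set Rot(F): the set of rotation numbers of positively recurrent
points of `f`. -/
def Rot (f : Ann → Ann) (F : Plane → Plane) : Set ℝ := {ρ | ∃ z, HasRotNum f F z ρ}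

/-- The region `L(Γ)` of the plane on the left (west) of a line `Γ` (as a subset of ℝ²):
points lying in the connected component of the complement of `Γ` containing all far-west
points of the horizontal axis. -/
def Lset (Γ : Set Plane) : Set Plane :=
  {p | ∃ s : ℝ, ∀ x ≤ s, p ∈ connectedComponentIn Γᶜ ((x, 0) : Plane)}

/-- The region `R(Γ)` of the plane on the right (east) of a line `Γ`. -/
def Rset (Γ : Set Plane) : Set Plane :=
  {p | ∃ s : ℝ, ∀ x ≥ s, p ∈ connectedComponentIn Γᶜ ((x, 0) : Plane)}

/-- The relation `Γ₁ < Γ₂` on (essential, oriented from south to north) lines: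
`Cl(L(Γ₁)) ⊆ L(Γ₂)`. -/
def lineLT (Γ₁ Γ₂ : Set Plane) : Prop := closure (Lset Γ₁) ⊆ Lset Γ₂

/-- An essential line in ℝ², oriented from south to north: a properly embedded copy of ℝ
whose second coordinate tends to ±∞ at ±∞. -/
def IsEssLinePlane (Γ : ℝ → Plane) : Prop :=
  Continuous Γ ∧ Function.Injective Γ ∧ IsProperMap Γ ∧
    Tendsto (fun t => (Γ t).2) atTop atTop ∧ Tendsto (fun t => (Γ t).2) atBot atBot

/-- An essential line in the annulus 𝔸: a properly embedded simple path joining one end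
to the other. -/
def IsEssLineAnn (γ : ℝ → Ann) : Prop :=
  Continuous γ ∧ Function.Injective γ ∧ IsProperMap γ ∧
    ((Tendsto (fun t => (γ t).2) atTop atTop ∧ Tendsto (fun t => (γ t).2) atBot atBot) ∨
     (Tendsto (fun t => (γ t).2) atTop atBot ∧ Tendsto (fun t => (γ t).2) atBot atTop))

/-- An oriented essential line in 𝔸 joining the lower end S to the upper end N. -/
def IsEssLineAnnSN (γ : ℝ → Ann) : Prop :=
  Continuous γ ∧ Function.Injective γ ∧ IsProperMap γ ∧
    Tendsto (fun t => (γ t).2) atTop atTop ∧ Tendsto (fun t => (γ t).2) atBot atBot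

/-- The weak rotation set of `F` relative to a compact set `K` of the annulus,
as a subset of [-∞,+∞]. -/
def RotWeakK (F : Plane → Plane) (K : Set Ann) : Set EReal :=
  {r | ∃ zs : ℕ → Plane, ∃ ns : ℕ → ℕ,
      (∀ k, prj (zs k) ∈ K) ∧ (∀ k, prj (F^[ns k] (zs k)) ∈ K) ∧
      (∀ k, 0 < ns k) ∧ Tendsto ns atTop atTop ∧
      Tendsto (fun k => ((((F^[ns k] (zs k)).1 - (zs k).1) / (ns k : ℝ) : ℝ) : EReal))
        atTop (𝓝 r)}

/-- The weak rotation set of `F`: union of the `RotWeakK F K` over all compact `K ⊆ 𝔸`. -/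
def RotWeak (F : Plane → Plane) : Set EReal :=
  ⋃ K ∈ {K : Set Ann | IsCompact K}, RotWeakK F K

/-!
Set `S = F^q T^{-p}` and `S' = F^{-q'} T^{p'}`, two commuting maps with `S^{q'} S'^q = T`. Since
the weak rotation numbers of `F` lie strictly between `p/q` and `p'/q'`, the action of `ℕ²`
generated by `S` and `S'` on the plane is proper. It therefore has a Lyapunov function `u`, strictly
increasing along the action, which is negative to the west and positive to the east.

The inverse of each generator maps the complement of `B` into `A`, for the disjoint closed sets
`A = {u ≤ 0}` and `B = {u ∘ S⁻¹ ≥ 0} ∪ {u ∘ S'⁻¹ ≥ 0}`. After a radial stretching of the plane, `A`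
and `B` are at distance more than `2`, so that some set of vertices of the triangular lattice
separates them. Keep its component near the western end, then the component near the eastern end of
the complement: both sides are now connected, and the triangles crossed form a properly embedded
line `Γ`, which the generators move strictly to the east.

As `qp' - pq' = 1`, every `F^n T^m ≠ 1` with `|n| < q + q'` is an element of this monoid or the
inverse of one. Hence `Γ` is disjoint from its image under `F^n T^m`, and the side on which that
image lies is given by the sign of `nρ + m`, for every `ρ` in the Farey interval.
-/

/-! ### Connected sets of vertices in a graph -/

section Graph

variable {V : Type*} {G : SimpleGraph V} {S C : Set V} {a b x y : V}

/-- A set of vertices is connected if any two of its elements are joined by a path of `G` which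
stays in the set. -/
def IsGraphConnected (G : SimpleGraph V) (S : Set V) : Prop :=
  ∀ ⦃a⦄, a ∈ S → ∀ ⦃b⦄, b ∈ S → (G.induce S).spanningCoe.Reachable a b

/-- The connected component of `a` in the set of vertices `S`; it is `{a}` when `a ∉ S`. -/
def graphComponent (G : SimpleGraph V) (S : Set V) (a : V) : Set V :=
  {b | (G.induce S).spanningCoe.Reachable a b}

lemma spanningCoe_induce_adj :
    (G.induce S).spanningCoe.Adj x y ↔ G.Adj x y ∧ x ∈ S ∧ y ∈ S := by
  simp

lemma self_mem_graphComponent : a ∈ graphComponent G S a :=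
  SimpleGraph.Reachable.rfl

lemma graphComponent_subset (ha : a ∈ S) : graphComponent G S a ⊆ S := by
  intro b hb
  cases (SimpleGraph.reachable_iff_reflTransGen a b).1 hb with
  | refl => exact ha
  | tail _ h => exact (spanningCoe_induce_adj.1 h).2.2

lemma mem_graphComponent_of_adj (ha : a ∈ S) (hx : x ∈ graphComponent G S a) (hy : y ∈ S)
    (h : G.Adj x y) : y ∈ graphComponent G S a :=
  SimpleGraph.Reachable.trans hx
    (spanningCoe_induce_adj.2 ⟨h, graphComponent_subset ha hx, hy⟩).reachable

lemma isGraphConnected_graphComponent (G : SimpleGraph V) (S : Set V) (a : V) :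
    IsGraphConnected G (graphComponent G S a) := by
  have from_base (b : V) (hb : b ∈ graphComponent G S a) :
      (G.induce (graphComponent G S a)).spanningCoe.Reachable a b := by
    induction (SimpleGraph.reachable_iff_reflTransGen a b).1 hb with
    | refl => exact .rfl
    | @tail x y hx hxy ih =>
      have hx : x ∈ graphComponent G S a := (SimpleGraph.reachable_iff_reflTransGen a x).2 hx
      exact (ih hx).trans
        (spanningCoe_induce_adj.2 ⟨(spanningCoe_induce_adj.1 hxy).1, hx, hb⟩).reachable
  exact fun x hx y hy => (from_base x hx).symm.trans (from_base y hy)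

lemma isGraphConnected_compl_graphComponent_compl (hG : G.Preconnected)
    (hC : IsGraphConnected G C) (hne : C.Nonempty) (hb : b ∉ C) :
    IsGraphConnected G (graphComponent G Cᶜ b)ᶜ := by
  obtain ⟨c, hc⟩ := hne
  set R := graphComponent G Cᶜ b
  have hCR : C ⊆ Rᶜ := fun x hx hxR => graphComponent_subset hb hxR hx
  have reaches_C (x : V) (hx : x ∈ Rᶜ) :
      ∃ d ∈ C, (G.induce Rᶜ).spanningCoe.Reachable x d := by
    induction (SimpleGraph.reachable_iff_reflTransGen x c).1 (hG x c) using
      Relation.ReflTransGen.head_induction_on with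
    | refl => exact ⟨c, hc, .rfl⟩
    | @head x y hxy _ ih =>
      by_cases hxC : x ∈ C
      · exact ⟨x, hxC, .rfl⟩
      have hy : y ∈ Rᶜ := fun h => hx (mem_graphComponent_of_adj hb h hxC hxy.symm)
      obtain ⟨d, hd, hyd⟩ := ih hy
      exact ⟨d, hd, (spanningCoe_induce_adj.2 ⟨hxy, hx, hy⟩).reachable.trans hyd⟩
  have hmono : (G.induce C).spanningCoe ≤ (G.induce Rᶜ).spanningCoe := by
    intro x y h
    rw [spanningCoe_induce_adj] at h ⊢
    exact ⟨h.1, hCR h.2.1, hCR h.2.2⟩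
  intro x hx y hy
  obtain ⟨d, hd, hxd⟩ := reaches_C x hx
  obtain ⟨e, he, hye⟩ := reaches_C y hy
  exact (hxd.trans ((hC hd he).mono hmono)).trans hye.symm

end Graph

/-! ### The triangular lattice -/

section Lattice

variable {a b c v : ℤ × ℤ}

/-- The triangular lattice, in the affine coordinates in which its edges are parallel to
`(1, 0)`, `(0, 1)` and `(-1, 1)`. -/
def triLattice : SimpleGraph (ℤ × ℤ) where
  Adj a b :=
    (b.1 = a.1 + 1 ∧ b.2 = a.2) ∨ (b.1 = a.1 ∧ b.2 = a.2 + 1) ∨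
    (b.1 = a.1 - 1 ∧ b.2 = a.2 + 1) ∨ (b.1 = a.1 - 1 ∧ b.2 = a.2) ∨
    (b.1 = a.1 ∧ b.2 = a.2 - 1) ∨ (b.1 = a.1 + 1 ∧ b.2 = a.2 - 1)
  symm := ⟨fun a b h => by omega⟩
  loopless := ⟨fun a h => by omega⟩

/-- The apex of the triangle of the lattice lying on the left of the oriented edge `(a, b)`; the
triangle on the right has apex `apex b a`. -/
def apex (a b : ℤ × ℤ) : ℤ × ℤ := (a.1 - (b.2 - a.2), a.2 + (b.1 - a.1) + (b.2 - a.2))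

/-- The positively oriented triangles of the lattice. -/
def IsTriangle (a b c : ℤ × ℤ) : Prop := triLattice.Adj a b ∧ c = apex a b

lemma triLattice_adj_iff : triLattice.Adj a b ↔
    (b.1 = a.1 + 1 ∧ b.2 = a.2) ∨ (b.1 = a.1 ∧ b.2 = a.2 + 1) ∨
    (b.1 = a.1 - 1 ∧ b.2 = a.2 + 1) ∨ (b.1 = a.1 - 1 ∧ b.2 = a.2) ∨
    (b.1 = a.1 ∧ b.2 = a.2 - 1) ∨ (b.1 = a.1 + 1 ∧ b.2 = a.2 - 1) :=
  Iff.rfl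

lemma triLattice_preconnected : triLattice.Preconnected := by
  have row (m n : ℤ) : triLattice.Reachable (0, n) (m, n) := by
    induction m using Int.induction_on with
    | zero => exact .rfl
    | succ i ih => exact ih.trans (triLattice_adj_iff.2 (by simp)).reachable
    | pred i ih => exact ih.trans (triLattice_adj_iff.2 (by simp)).reachable
  have column (n : ℤ) : triLattice.Reachable (0, 0) (0, n) := by
    induction n using Int.induction_on with
    | zero => exact .rfl
    | succ i ih => exact ih.trans (triLattice_adj_iff.2 (by simp)).reachable
    | pred i ih => exact ih.trans (triLattice_adj_iff.2 (by simp)).reachable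
  have from_zero (x : ℤ × ℤ) : triLattice.Reachable (0, 0) x :=
    (column x.2).trans (row x.1 x.2)
  exact fun x y => (from_zero x).symm.trans (from_zero y)

namespace IsTriangle

lemma rotate (h : IsTriangle a b c) : IsTriangle b c a := by
  obtain ⟨a1, a2⟩ := a; obtain ⟨b1, b2⟩ := b; obtain ⟨c1, c2⟩ := c
  simp only [IsTriangle, triLattice_adj_iff, apex, Prod.mk.injEq] at *
  omega

lemma adj_left (h : IsTriangle a b c) : triLattice.Adj a b := h.1

lemma adj_right (h : IsTriangle a b c) : triLattice.Adj a c := h.rotate.rotate.adj_left.symm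

end IsTriangle

/-- The vertex `v` of the triangular lattice as a point of the plane. -/
def latticePoint (v : ℤ × ℤ) : Plane := (v.1, v.2)

lemma isTriangle_apex (h : triLattice.Adj a b) : IsTriangle a b (apex a b) := ⟨h, rfl⟩

lemma dist_latticePoint_le_one_of_adj (h : triLattice.Adj a b) :
    dist (latticePoint a) (latticePoint b) ≤ 1 := by
  rw [triLattice_adj_iff] at h
  simp only [latticePoint, Prod.dist_eq, Int.dist_cast_real, Int.dist_eq, ← Int.cast_sub,
    ← Int.cast_abs, max_le_iff]
  norm_cast
  grind

lemma tendsto_latticePoint_cofinite_cocompact :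
    Tendsto latticePoint cofinite (cocompact Plane) := by
  rw [← cocompact_eq_cofinite (ℤ × ℤ)]
  exact (Int.isClosedEmbedding_coe_real.prodMap Int.isClosedEmbedding_coe_real).tendsto_cocompact

lemma finite_setOf_dist_latticePoint_le (z : Plane) (r : ℝ) :
    {v : ℤ × ℤ | dist (latticePoint v) z ≤ r}.Finite := by
  have h := tendsto_latticePoint_cofinite_cocompact
    (isCompact_closedBall z r).compl_mem_cocompact
  rwa [mem_map, mem_cofinite, preimage_compl, compl_compl] at h

end Lattice

/-! ### Piecewise affine interpolation -/

section Interpolation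

variable {a b c v : ℤ × ℤ} {z : Plane} {α β γ : ℝ}

/-- The continuous function with value `1` at the origin and `0` at the other lattice points
which is affine on each triangle of the lattice; its support is a hexagon. -/
def hexHat (x y : ℝ) : ℝ := max 0 (1 - max (max |x| |y|) |x + y|)

/-- The interpolation of `c`, affine on each triangle of the lattice. -/
def interpolate (c : ℤ × ℤ → ℝ) (z : Plane) : ℝ :=
  ∑ᶠ v : ℤ × ℤ, c v * hexHat (z.1 - v.1) (z.2 - v.2)

/-- The point `z` lies in the positively oriented triangle `a b c`, with barycentric coordinates
`α`, `β`, `γ`. -/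
structure IsBarycentric (z : Plane) (a b c : ℤ × ℤ) (α β γ : ℝ) : Prop where
  isTriangle : IsTriangle a b c
  nonneg_left : 0 ≤ α
  nonneg_mid : 0 ≤ β
  nonneg_right : 0 ≤ γ
  add_eq_one : α + β + γ = 1
  eq_add : z = α • latticePoint a + β • latticePoint b + γ • latticePoint c

lemma hexHat_neg (x y : ℝ) : hexHat (-x) (-y) = hexHat x y := by
  rw [hexHat, hexHat, abs_neg, abs_neg, ← neg_add, abs_neg]

lemma hexHat_eq_zero_iff {x y : ℝ} : hexHat x y = 0 ↔ 1 ≤ |x| ∨ 1 ≤ |y| ∨ 1 ≤ |x + y| := by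
  simp [hexHat, or_assoc]

lemma hexHat_of_mem_triangle {x y : ℝ} (hx : 0 ≤ x) (hy : 0 ≤ y) (hxy : x + y ≤ 1) (k l : ℤ) :
    hexHat (x - k) (y - l) = (if k = 0 ∧ l = 0 then 1 - x - y else 0) +
      (if k = 1 ∧ l = 0 then x else 0) + (if k = 0 ∧ l = 1 then y else 0) := by
  rcases (by omega : k ≤ -1 ∨ 2 ≤ k ∨ l ≤ -1 ∨ 2 ≤ l ∨ (k = 0 ∧ l = 0) ∨ (k = 1 ∧ l = 0) ∨
    (k = 0 ∧ l = 1) ∨ (k = 1 ∧ l = 1)) with h | h | h | h | ⟨rfl, rfl⟩ | ⟨rfl, rfl⟩ | ⟨rfl, rfl⟩ |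
    ⟨rfl, rfl⟩
  · have hk : (k : ℝ) ≤ -1 := by exact_mod_cast h
    rw [hexHat_eq_zero_iff.2 (.inl (le_abs.2 (.inl (by linarith))))]
    grind
  · have hk : (2 : ℝ) ≤ k := by exact_mod_cast h
    rw [hexHat_eq_zero_iff.2 (.inl (le_abs.2 (.inr (by linarith))))]
    grind
  · have hl : (l : ℝ) ≤ -1 := by exact_mod_cast h
    rw [hexHat_eq_zero_iff.2 (.inr (.inl (le_abs.2 (.inl (by linarith)))))]
    grind
  · have hl : (2 : ℝ) ≤ l := by exact_mod_cast h
    rw [hexHat_eq_zero_iff.2 (.inr (.inl (le_abs.2 (.inr (by linarith)))))]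
    grind
  all_goals
    simp only [hexHat, Int.cast_zero, Int.cast_one]
    grind

lemma locallyFinite_support_hexHat : LocallyFinite fun v : ℤ × ℤ =>
    Function.support fun z : Plane => hexHat (z.1 - v.1) (z.2 - v.2) := by
  intro z
  refine ⟨Metric.ball z 1, Metric.ball_mem_nhds z one_pos,
    (finite_setOf_dist_latticePoint_le z 2).subset ?_⟩
  rintro v ⟨y, hy, hyz⟩
  rw [Function.mem_support, Ne, hexHat_eq_zero_iff] at hy
  have hvy : dist (latticePoint v) y ≤ 1 := by
    rw [dist_comm, Prod.dist_eq, Real.dist_eq, Real.dist_eq]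
    grind [latticePoint]
  rw [Metric.mem_ball] at hyz
  exact (dist_triangle _ y z).trans (by linarith)

lemma continuous_interpolate (c : ℤ × ℤ → ℝ) : Continuous (interpolate c) := by
  refine continuous_finsum (fun v => ?_) (locallyFinite_support_hexHat.subset fun v z hz => ?_)
  · unfold hexHat
    fun_prop
  · exact right_ne_zero_of_mul hz

namespace IsBarycentric

lemma rotate (h : IsBarycentric z a b c α β γ) : IsBarycentric z b c a β γ α :=
  ⟨h.isTriangle.rotate, h.nonneg_mid, h.nonneg_right, h.nonneg_left,
    by linarith [h.add_eq_one], by rw [h.eq_add]; abel⟩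

lemma fst_eq (h : IsBarycentric z a b c α β γ) : z.1 = α * a.1 + β * b.1 + γ * c.1 := by
  simp [h.eq_add, latticePoint]

lemma snd_eq (h : IsBarycentric z a b c α β γ) : z.2 = α * a.2 + β * b.2 + γ * c.2 := by
  simp [h.eq_add, latticePoint]

lemma hexHat_eq_of_horizontal (h : IsBarycentric z a b c α β γ)
    (hab : (b.1 = a.1 + 1 ∧ b.2 = a.2) ∨ (b.1 = a.1 - 1 ∧ b.2 = a.2)) (v : ℤ × ℤ) :
    hexHat (z.1 - v.1) (z.2 - v.2) =
      (if v = a then α else 0) + (if v = b then β else 0) + (if v = c then γ else 0) := by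
  have hx := h.fst_eq
  have hy := h.snd_eq
  obtain ⟨⟨-, hc⟩, hα, hβ, hγ, hsum, -⟩ := h
  obtain ⟨a1, a2⟩ := a; obtain ⟨b1, b2⟩ := b; obtain ⟨v1, v2⟩ := v
  obtain rfl : α = 1 - β - γ := by linarith
  have hle : β + γ ≤ 1 := by linarith
  subst hc
  simp only [apex, Prod.mk.injEq] at *
  rcases hab with ⟨rfl, rfl⟩ | ⟨rfl, rfl⟩
  · have hz := hexHat_of_mem_triangle hβ hγ hle (v1 - a1) (v2 - b2)
    rw [show z.1 - v1 = β - (v1 - a1 : ℤ) by rw [hx]; push_cast; ring,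
      show z.2 - v2 = γ - (v2 - b2 : ℤ) by rw [hy]; push_cast; ring, hz]
    grind
  · have hz := hexHat_of_mem_triangle hβ hγ hle (a1 - v1) (b2 - v2)
    rw [← hexHat_neg, show -(z.1 - v1) = β - (a1 - v1 : ℤ) by rw [hx]; push_cast; ring,
      show -(z.2 - v2) = γ - (b2 - v2 : ℤ) by rw [hy]; push_cast; ring, hz]
    grind

lemma hexHat_eq (h : IsBarycentric z a b c α β γ) (v : ℤ × ℤ) :
    hexHat (z.1 - v.1) (z.2 - v.2) =
      (if v = a then α else 0) + (if v = b then β else 0) + (if v = c then γ else 0) := by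
  have horizontal_edge : ((b.1 = a.1 + 1 ∧ b.2 = a.2) ∨ (b.1 = a.1 - 1 ∧ b.2 = a.2)) ∨
      ((c.1 = b.1 + 1 ∧ c.2 = b.2) ∨ (c.1 = b.1 - 1 ∧ c.2 = b.2)) ∨
      ((a.1 = c.1 + 1 ∧ a.2 = c.2) ∨ (a.1 = c.1 - 1 ∧ a.2 = c.2)) := by
    obtain ⟨⟨hab, hc⟩, -⟩ := h
    simp only [triLattice_adj_iff, apex, Prod.ext_iff] at hab hc
    omega
  rcases horizontal_edge with hab | hbc | hca
  · exact h.hexHat_eq_of_horizontal hab v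
  · rw [h.rotate.hexHat_eq_of_horizontal hbc v]
    ring
  · rw [h.rotate.rotate.hexHat_eq_of_horizontal hca v]
    ring

lemma interpolate_eq (h : IsBarycentric z a b c α β γ) (f : ℤ × ℤ → ℝ) :
    interpolate f z = α * f a + β * f b + γ * f c := by
  have hab := h.isTriangle.adj_left.ne
  have hbc := h.isTriangle.rotate.adj_left.ne
  have hac := h.isTriangle.adj_right.ne
  rw [interpolate, finsum_eq_sum_of_support_subset (s := {a, b, c})]
  · rw [Finset.sum_insert (by simp [hab, hac]), Finset.sum_insert (by simp [hbc]),
      Finset.sum_singleton, h.hexHat_eq, h.hexHat_eq, h.hexHat_eq]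
    grind
  · intro v hv
    have := right_ne_zero_of_mul hv
    rw [h.hexHat_eq] at this
    grind

lemma dist_le_one (h : IsBarycentric z a b c α β γ) :
    dist (latticePoint a) z ≤ 1 := by
  have hb := dist_latticePoint_le_one_of_adj h.isTriangle.adj_left
  have hc := dist_latticePoint_le_one_of_adj h.isTriangle.adj_right
  rw [dist_comm, dist_eq_norm] at hb hc ⊢
  have hz : z - latticePoint a = β • (latticePoint b - latticePoint a) +
      γ • (latticePoint c - latticePoint a) := by
    rw [h.eq_add, show α = 1 - β - γ by linarith [h.add_eq_one]]
    module
  calc ‖z - latticePoint a‖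
      ≤ β * ‖latticePoint b - latticePoint a‖ + γ * ‖latticePoint c - latticePoint a‖ := by
        rw [hz]
        refine (norm_add_le _ _).trans_eq ?_
        rw [norm_smul_of_nonneg h.nonneg_mid, norm_smul_of_nonneg h.nonneg_right]
    _ ≤ β * 1 + γ * 1 := by gcongr <;> [exact h.nonneg_mid; exact h.nonneg_right]
    _ ≤ 1 := by linarith [h.nonneg_left, h.add_eq_one]

end IsBarycentric

lemma exists_isBarycentric (z : Plane) : ∃ a b c α β γ, IsBarycentric z a b c α β γ := by
  have hx := Int.fract_add_floor z.1
  have hy := Int.fract_add_floor z.2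
  have hx0 := Int.fract_nonneg z.1
  have hy0 := Int.fract_nonneg z.2
  have hx1 := (Int.fract_lt_one z.1).le
  have hy1 := (Int.fract_lt_one z.2).le
  rcases le_total (Int.fract z.1 + Int.fract z.2) 1 with h | h
  · refine ⟨(⌊z.1⌋, ⌊z.2⌋), (⌊z.1⌋ + 1, ⌊z.2⌋), (⌊z.1⌋, ⌊z.2⌋ + 1),
      1 - Int.fract z.1 - Int.fract z.2, Int.fract z.1, Int.fract z.2,
      ⟨?_, ?_⟩, by linarith, hx0, hy0, by ring, ?_⟩
    · simp [triLattice_adj_iff]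
    · simp [apex]
    · ext <;> simp [latticePoint] <;> linarith
  · refine ⟨(⌊z.1⌋ + 1, ⌊z.2⌋ + 1), (⌊z.1⌋, ⌊z.2⌋ + 1), (⌊z.1⌋ + 1, ⌊z.2⌋),
      Int.fract z.1 + Int.fract z.2 - 1, 1 - Int.fract z.1, 1 - Int.fract z.2,
      ⟨?_, ?_⟩, by linarith, by linarith, by linarith, by ring, ?_⟩
    · simp [triLattice_adj_iff]
    · simp [apex]
    · ext <;> simp [latticePoint] <;> linarith

lemma interpolate_neg (f : ℤ × ℤ → ℝ) (z : Plane) :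
    interpolate (-f) z = -interpolate f z := by
  obtain ⟨a, b, c, α, β, γ, h⟩ := exists_isBarycentric z
  rw [h.interpolate_eq, h.interpolate_eq]
  simp only [Pi.neg_apply]
  ring

lemma interpolate_mono : Monotone interpolate := by
  intro f g hfg z
  obtain ⟨a, b, c, α, β, γ, h⟩ := exists_isBarycentric z
  rw [h.interpolate_eq, h.interpolate_eq]
  have := mul_le_mul_of_nonneg_left (hfg a) h.nonneg_left
  have := mul_le_mul_of_nonneg_left (hfg b) h.nonneg_mid
  have := mul_le_mul_of_nonneg_left (hfg c) h.nonneg_right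
  linarith

end Interpolation

/-! ### Level functions of sets of vertices -/

section Level

variable {S S' : Set (ℤ × ℤ)} {a b c s v : ℤ × ℤ} {z : Plane} {α β γ : ℝ} {t : Set Plane}

open Classical in
/-- The function with value `1` on `S` and `-1` off `S`. -/
def latticeSign (S : Set (ℤ × ℤ)) (v : ℤ × ℤ) : ℝ := if v ∈ S then 1 else -1

/-- The piecewise affine function attached to a set of vertices `S`. The set where it is positive
is a thickening of `S`, and the set where it vanishes separates `S` from its complement. -/
def level (S : Set (ℤ × ℤ)) : Plane → ℝ := interpolate (latticeSign S)

lemma latticeSign_of_mem (h : v ∈ S) : latticeSign S v = 1 := if_pos h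

lemma latticeSign_of_notMem (h : v ∉ S) : latticeSign S v = -1 := if_neg h

lemma latticeSign_compl (S : Set (ℤ × ℤ)) : latticeSign Sᶜ = -latticeSign S := by
  ext v
  by_cases h : v ∈ S <;> simp [latticeSign, h]

lemma latticeSign_mono : Monotone latticeSign := by
  intro S S' h v
  by_cases hv : v ∈ S <;> by_cases hv' : v ∈ S' <;> grind [latticeSign]

lemma continuous_level (S : Set (ℤ × ℤ)) : Continuous (level S) := continuous_interpolate _

lemma level_compl (S : Set (ℤ × ℤ)) (z : Plane) : level Sᶜ z = -level S z := by
  rw [level, latticeSign_compl, interpolate_neg, level]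

lemma level_mono : Monotone level := interpolate_mono.comp latticeSign_mono

namespace IsBarycentric

lemma level_eq (h : IsBarycentric z a b c α β γ) (S : Set (ℤ × ℤ)) :
    level S z = α * latticeSign S a + β * latticeSign S b + γ * latticeSign S c :=
  h.interpolate_eq _

lemma exists_mem_of_neg_one_lt_level (h : IsBarycentric z a b c α β γ) (hz : -1 < level S z) :
    ∃ a ∈ S, ∃ b c α β γ, IsBarycentric z a b c α β γ := by
  by_cases ha : a ∈ S
  · exact ⟨a, ha, _, _, _, _, _, h⟩
  by_cases hb : b ∈ S
  · exact ⟨b, hb, _, _, _, _, _, h.rotate⟩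
  by_cases hc : c ∈ S
  · exact ⟨c, hc, _, _, _, _, _, h.rotate.rotate⟩
  rw [h.level_eq, latticeSign_of_notMem ha, latticeSign_of_notMem hb,
    latticeSign_of_notMem hc] at hz
  linarith [h.add_eq_one]

lemma level_graphComponent (h : IsBarycentric z a b c α β γ) (hs : s ∈ S)
    (ha : a ∈ graphComponent triLattice S s) :
    level (graphComponent triLattice S s) z = level S z := by
  have sign_eq (v : ℤ × ℤ) (hv : triLattice.Adj a v) :
      latticeSign (graphComponent triLattice S s) v = latticeSign S v := by
    by_cases hvS : v ∈ S
    · rw [latticeSign_of_mem hvS,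
        latticeSign_of_mem (mem_graphComponent_of_adj hs ha hvS hv)]
    · rw [latticeSign_of_notMem hvS,
        latticeSign_of_notMem fun h => hvS (graphComponent_subset hs h)]
  rw [h.level_eq, h.level_eq, sign_eq b h.isTriangle.adj_left, sign_eq c h.isTriangle.adj_right,
    latticeSign_of_mem ha, latticeSign_of_mem (graphComponent_subset hs ha)]

lemma segment_subset_level_nonneg (h : IsBarycentric z a b c α β γ) (ha : a ∈ S)
    (hz : 0 ≤ level S z) : segment ℝ z (latticePoint a) ⊆ {w | 0 ≤ level S w} := by
  rintro _ ⟨x, y, hx, hy, hxy, rfl⟩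
  have hw : IsBarycentric (x • z + y • latticePoint a) a b c (x * α + y) (x * β) (x * γ) := by
    refine ⟨h.isTriangle, add_nonneg (mul_nonneg hx h.nonneg_left) hy,
      mul_nonneg hx h.nonneg_mid, mul_nonneg hx h.nonneg_right, ?_, ?_⟩
    · linear_combination x * h.add_eq_one + hxy
    · rw [h.eq_add]
      module
  rw [h.level_eq, latticeSign_of_mem ha] at hz
  rw [mem_ofPred_eq, hw.level_eq, latticeSign_of_mem ha]
  linarith [mul_nonneg hx hz]

end IsBarycentric

lemma isBarycentric_latticePoint (h : IsTriangle a b c) :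
    IsBarycentric (latticePoint a) a b c 1 0 0 :=
  ⟨h, zero_le_one, le_rfl, le_rfl, by norm_num, by module⟩

lemma level_latticePoint (S : Set (ℤ × ℤ)) (v : ℤ × ℤ) :
    level S (latticePoint v) = latticeSign S v := by
  have h : triLattice.Adj v (v.1 + 1, v.2) := by simp [triLattice_adj_iff]
  simp [(isBarycentric_latticePoint (isTriangle_apex h)).level_eq]

lemma isPreconnected_level_nonneg (hS : IsGraphConnected triLattice S) :
    IsPreconnected {z | 0 ≤ level S z} := by
  have join_vertex (z : Plane) (hz : 0 ≤ level S z) :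
      ∃ a ∈ S, JoinedIn {z | 0 ≤ level S z} z (latticePoint a) := by
    obtain ⟨_, _, _, _, _, _, h⟩ := exists_isBarycentric z
    obtain ⟨a, ha, _, _, _, _, _, h⟩ :=
      h.exists_mem_of_neg_one_lt_level (neg_one_lt_zero.trans_le hz)
    exact ⟨a, ha, .of_segment_subset (h.segment_subset_level_nonneg ha hz)⟩
  have vertex_mem (a : ℤ × ℤ) (ha : a ∈ S) : latticePoint a ∈ {z | 0 ≤ level S z} := by
    simp [level_latticePoint, latticeSign_of_mem ha]
  have join_vertices (a : ℤ × ℤ) (ha : a ∈ S) (b : ℤ × ℤ) (hb : b ∈ S) :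
      JoinedIn {z | 0 ≤ level S z} (latticePoint a) (latticePoint b) := by
    induction (SimpleGraph.reachable_iff_reflTransGen a b).1 (hS ha hb) with
    | refl => exact .refl (vertex_mem a ha)
    | @tail x y _ hxy ih =>
      obtain ⟨hadj, hx, hy⟩ := spanningCoe_induce_adj.1 hxy
      have h := (isBarycentric_latticePoint (isTriangle_apex hadj)).rotate
      exact (ih hx).trans (.of_segment_subset (h.segment_subset_level_nonneg hy (vertex_mem x hx)))
  rcases eq_empty_or_nonempty {z | 0 ≤ level S z} with hempty | hne
  · exact hempty ▸ isPreconnected_empty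
  refine (isPathConnected_iff.2 ⟨hne, fun x hx y hy => ?_⟩).isConnected.isPreconnected
  obtain ⟨a, ha, hxa⟩ := join_vertex x hx
  obtain ⟨b, hb, hyb⟩ := join_vertex y hy
  exact (hxa.trans (join_vertices a ha b hb)).trans hyb.symm

lemma exists_level_graphComponent_pos (hz : 0 < level S z) :
    ∃ s ∈ S, 0 < level (graphComponent triLattice S s) z := by
  obtain ⟨_, _, _, _, _, _, h⟩ := exists_isBarycentric z
  obtain ⟨s, hs, _, _, _, _, _, h⟩ := h.exists_mem_of_neg_one_lt_level (by linarith)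
  exact ⟨s, hs, by rwa [h.level_graphComponent hs self_mem_graphComponent]⟩

lemma disjoint_level_pos (h : Disjoint S S') :
    Disjoint {z | 0 < level S z} {z | 0 < level S' z} := by
  have hsub := level_mono (subset_compl_iff_disjoint_right.2 h)
  rw [Set.disjoint_left]
  intro z hz hz'
  have := hsub z
  rw [level_compl] at this
  simp only [mem_ofPred_eq] at hz hz'
  linarith

lemma level_pos_subset_union (hs : s ∈ S) :
    {z | 0 < level S z} ⊆ {z | 0 < level (graphComponent triLattice S s) z} ∪
      {z | 0 < level (S \ graphComponent triLattice S s) z} := by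
  intro z hz
  obtain ⟨a, b, c, α, β, γ, h⟩ := exists_isBarycentric z
  by_cases hz' : -1 < level (graphComponent triLattice S s) z
  · obtain ⟨a, ha, _, _, _, _, _, h⟩ := h.exists_mem_of_neg_one_lt_level hz'
    left
    rwa [mem_ofPred_eq, h.level_graphComponent hs ha]
  · right
    have sign_add (v : ℤ × ℤ) : latticeSign (S \ graphComponent triLattice S s) v =
        latticeSign S v - latticeSign (graphComponent triLattice S s) v - 1 := by
      by_cases hv : v ∈ S <;> by_cases hv' : v ∈ graphComponent triLattice S s
      · simp [latticeSign, hv, hv']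
      · simp [latticeSign, hv, hv']
      · exact absurd (graphComponent_subset hs hv') hv
      · simp [latticeSign, hv, hv']
    have hz : 0 < level S z := hz
    have hadd : level (S \ graphComponent triLattice S s) z =
        level S z - level (graphComponent triLattice S s) z - 1 := by
      simp only [h.level_eq, sign_add]
      linear_combination -h.add_eq_one
    rw [mem_ofPred_eq, hadd]
    linarith

lemma level_graphComponent_pos_of_isPreconnected (hs : s ∈ S) (ht : IsPreconnected t)
    (htS : ∀ z ∈ t, 0 < level S z) (hne : ∃ z ∈ t, 0 < level (graphComponent triLattice S s) z) :
    ∀ z ∈ t, 0 < level (graphComponent triLattice S s) z :=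
  ht.subset_left_of_subset_union (isOpen_lt continuous_const (continuous_level _))
    (isOpen_lt continuous_const (continuous_level _)) (disjoint_level_pos disjoint_sdiff_right)
    (fun z hz => level_pos_subset_union hs (htS z hz)) hne

lemma mapsTo_level_graphComponent {Ψ : Plane → Plane} (hs : s ∈ S) (hΨ : Continuous Ψ)
    (hmaps : MapsTo Ψ {z | 0 ≤ level S z} {z | 0 < level S z})
    (hne : ∃ z, 0 ≤ level (graphComponent triLattice S s) z ∧
      0 < level (graphComponent triLattice S s) (Ψ z)) :
    MapsTo Ψ {z | 0 ≤ level (graphComponent triLattice S s) z}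
      {z | 0 < level (graphComponent triLattice S s) z} := by
  have himage := (isPreconnected_level_nonneg
    (isGraphConnected_graphComponent triLattice S s)).image Ψ hΨ.continuousOn
  rw [mapsTo_iff_image_subset]
  refine level_graphComponent_pos_of_isPreconnected hs himage ?_ ?_
  · rintro _ ⟨z, hz, rfl⟩
    exact hmaps (le_trans hz (level_mono (graphComponent_subset hs) z))
  · obtain ⟨z, hz, hΨz⟩ := hne
    exact ⟨Ψ z, mem_image_of_mem Ψ hz, hΨz⟩

lemma mapsTo_symm_level_compl {Ψ : Plane ≃ₜ Plane}
    (h : MapsTo Ψ {z | 0 ≤ level S z} {z | 0 < level S z}) :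
    MapsTo Ψ.symm {z | 0 ≤ level Sᶜ z} {z | 0 < level Sᶜ z} := by
  intro z hz
  rw [mem_ofPred_eq, level_compl] at hz ⊢
  by_contra hneg
  have := h (x := Ψ.symm z) (by rw [mem_ofPred_eq]; linarith)
  rw [mem_ofPred_eq, Ψ.apply_symm_apply] at this
  linarith

lemma exists_mapsTo_level_graphComponent {ι : Type*} {Ψ : ι → Plane → Plane}
    (hΨ : ∀ i, Continuous (Ψ i))
    (hmaps : ∀ i, MapsTo (Ψ i) {z | 0 ≤ level S z} {z | 0 < level S z})
    (ht : IsPreconnected t) (hne : t.Nonempty) (htS : ∀ z ∈ t, 0 < level S z)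
    (hreturn : ∀ i, ∃ z ∈ t, Ψ i z ∈ t) :
    ∃ s ∈ S, (∀ z ∈ t, 0 < level (graphComponent triLattice S s) z) ∧
      ∀ i, MapsTo (Ψ i) {z | 0 ≤ level (graphComponent triLattice S s) z}
        {z | 0 < level (graphComponent triLattice S s) z} := by
  obtain ⟨w, hw⟩ := hne
  obtain ⟨s, hs, hws⟩ := exists_level_graphComponent_pos (htS w hw)
  have hts := level_graphComponent_pos_of_isPreconnected hs ht htS ⟨w, hw, hws⟩
  refine ⟨s, hs, hts, fun i => mapsTo_level_graphComponent hs (hΨ i) (hmaps i) ?_⟩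
  obtain ⟨z, hz, hΨz⟩ := hreturn i
  exact ⟨z, (hts z hz).le, hts _ hΨz⟩

lemma exists_level_separating {A B : Set Plane} (hAB : ∀ a ∈ A, ∀ b ∈ B, 2 < dist a b) :
    ∃ S, (∀ z ∈ A, 0 < level S z) ∧ ∀ z ∈ B, level S z < 0 := by
  set S : Set (ℤ × ℤ) := {v | ∃ a ∈ A, dist (latticePoint v) a ≤ 1}
  refine ⟨S, fun z hz => ?_, fun z hz => ?_⟩ <;>
    obtain ⟨a, b, c, α, β, γ, h⟩ := exists_isBarycentric z
  · have ha : a ∈ S := ⟨z, hz, h.dist_le_one⟩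
    have hb : b ∈ S := ⟨z, hz, h.rotate.dist_le_one⟩
    have hc : c ∈ S := ⟨z, hz, h.rotate.rotate.dist_le_one⟩
    rw [h.level_eq, latticeSign_of_mem ha, latticeSign_of_mem hb, latticeSign_of_mem hc]
    linarith [h.add_eq_one]
  · by_contra hneg
    obtain ⟨v, ⟨a, ha, hav⟩, _, _, _, _, _, h⟩ :=
      h.exists_mem_of_neg_one_lt_level (S := S) (by linarith)
    linarith [hAB a ha z hz, h.dist_le_one, dist_triangle_left a z (latticePoint v)]

theorem exists_isGraphConnected_level_decreasing {ι : Type*} {Ψ : ι → Plane ≃ₜ Plane}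
    {A B E E' : Set Plane} (hAB : ∀ a ∈ A, ∀ b ∈ B, 2 < dist a b)
    (hΨ : ∀ i, MapsTo (Ψ i) Bᶜ A) (hE : IsPreconnected E) (hE' : IsPreconnected E')
    (hne : E.Nonempty) (hne' : E'.Nonempty) (hEA : E ⊆ A) (hEB : E' ⊆ B)
    (hreturn : ∀ i, ∃ z ∈ E, Ψ i z ∈ E) (hreturn' : ∀ i, ∃ z ∈ E', Ψ i z ∈ E') :
    ∃ S, IsGraphConnected triLattice S ∧ IsGraphConnected triLattice Sᶜ ∧
      (∀ z ∈ E, level S z < 0) ∧ (∀ z ∈ E', 0 < level S z) ∧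
      ∀ i z, level S z ≤ 0 → level S (Ψ i z) < 0 := by
  obtain ⟨S₀, hA, hB⟩ := exists_level_separating hAB
  have hS₀ (i : ι) : MapsTo (Ψ i) {z | 0 ≤ level S₀ z} {z | 0 < level S₀ z} :=
    fun z hz => hA _ (hΨ i fun hzB => (hB z hzB).not_ge hz)
  obtain ⟨s, hs, hEs, hmaps⟩ := exists_mapsTo_level_graphComponent
    (fun i => (Ψ i).continuous) hS₀ hE hne (fun z hz => hA z (hEA hz)) hreturn
  set C := graphComponent triLattice S₀ s
  have hE'C (z : Plane) (hz : z ∈ E') : 0 < level Cᶜ z := by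
    rw [level_compl]
    linarith [hB z (hEB hz), level_mono (graphComponent_subset (G := triLattice) hs) z]
  obtain ⟨r, hr, hE'r, hmaps'⟩ := exists_mapsTo_level_graphComponent
    (fun i => (Ψ i).symm.continuous) (fun i => mapsTo_symm_level_compl (hmaps i)) hE' hne' hE'C
    fun i => (hreturn' i).elim fun z hz => ⟨Ψ i z, hz.2, by simpa using hz.1⟩
  refine ⟨graphComponent triLattice Cᶜ r, isGraphConnected_graphComponent _ _ _,
    isGraphConnected_compl_graphComponent_compl triLattice_preconnected
      (isGraphConnected_graphComponent _ _ _) ⟨s, self_mem_graphComponent⟩ hr, ?_, hE'r, ?_⟩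
  · intro z hz
    have := level_mono (graphComponent_subset (G := triLattice) hr) z
    rw [level_compl] at this
    linarith [hEs z hz]
  · intro i z hz
    have := mapsTo_symm_level_compl (Ψ := (Ψ i).symm) (hmaps' i) (x := z)
    simp only [mem_ofPred_eq, level_compl, Homeomorph.symm_symm] at this
    linarith [this (by linarith)]

end Level

/-! ### Cocycles on the triangular lattice -/

section Cocycle

variable {A : Type*} [AddCommGroup A]

lemma exists_add_one_eq_add (f : ℤ → A) :
    ∃ F : ℤ → A, F 0 = 0 ∧ ∀ n, F (n + 1) = F n + f n := by
  refine ⟨fun n => ∑ i ∈ Finset.Ico 0 n, f i - ∑ i ∈ Finset.Ico n 0, f i, by simp, fun n => ?_⟩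
  beta_reduce
  rcases le_or_gt 0 n with hn | hn
  · rw [← Finset.insert_Ico_right_eq_Ico_add_one hn, Finset.sum_insert (by simp),
      Finset.Ico_eq_empty (by lia : ¬ n + 1 < 0), Finset.Ico_eq_empty (by lia : ¬ n < 0)]
    simp [add_comm]
  · rw [← Finset.insert_Ico_add_one_left_eq_Ico hn, Finset.sum_insert (by simp),
      Finset.Ico_eq_empty (by lia : ¬ 0 < n + 1), Finset.Ico_eq_empty (by lia : ¬ 0 < n)]
    simp

lemma exists_potential_of_cocycle {c : ℤ × ℤ → ℤ × ℤ → A} (hsymm : ∀ a b, c b a = -c a b)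
    (htri : ∀ a b d, IsTriangle a b d → c a b + c b d + c d a = 0) :
    ∃ χ : ℤ × ℤ → A, ∀ a b, triLattice.Adj a b → χ b = χ a + c a b := by
  obtain ⟨H, -, hH⟩ := exists_add_one_eq_add fun i => c (i, 0) (i + 1, 0)
  choose W hW0 hW using fun i => exists_add_one_eq_add fun j => c (i, j) (i, j + 1)
  have up (i j : ℤ) := htri (i, j) (i + 1, j) (i, j + 1) (by simp [IsTriangle, triLattice, apex])
  have down (i j : ℤ) := htri (i + 1, j + 1) (i, j + 1) (i + 1, j)
    (by simp [IsTriangle, triLattice, apex])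
  have horizontal (i j : ℤ) : H (i + 1) + W (i + 1) j = H i + W i j + c (i, j) (i + 1, j) := by
    induction j using Int.induction_on with
    | zero => grind
    | succ j ih => grind
    | pred j ih =>
      have h1 := up i (-j - 1)
      have h2 := down i (-j - 1)
      grind
  have diagonal (i j : ℤ) :
      H i + W i (j + 1) = H (i + 1) + W (i + 1) j + c (i + 1, j) (i, j + 1) := by
    have h1 := up i j
    grind
  refine ⟨fun v => H v.1 + W v.1 v.2, ?_⟩
  rintro ⟨a, b⟩ ⟨a', b'⟩ h
  dsimp only [triLattice] at h ⊢
  rcases h with ⟨rfl, rfl⟩ | ⟨rfl, rfl⟩ | ⟨rfl, rfl⟩ | ⟨rfl, rfl⟩ | ⟨rfl, rfl⟩ | ⟨rfl, rfl⟩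
  · exact horizontal a b'
  · grind
  · grind
  · grind
  · grind
  · grind

end Cocycle

/-! ### Boundary edges -/

section BoundaryEdge

variable {S : Set (ℤ × ℤ)} {E : Set ((ℤ × ℤ) × (ℤ × ℤ))} {p d e : (ℤ × ℤ) × (ℤ × ℤ)}
  {a b c : ℤ × ℤ}

/-- The oriented edges of the lattice which go from `S` to its complement. -/
def IsBoundaryEdge (S : Set (ℤ × ℤ)) (p : (ℤ × ℤ) × (ℤ × ℤ)) : Prop :=
  triLattice.Adj p.1 p.2 ∧ p.1 ∈ S ∧ p.2 ∉ S

open Classical in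
/-- The other boundary edge of the triangle on the left of a boundary edge. -/
def nextEdge (S : Set (ℤ × ℤ)) (p : (ℤ × ℤ) × (ℤ × ℤ)) : (ℤ × ℤ) × (ℤ × ℤ) :=
  if apex p.1 p.2 ∈ S then (apex p.1 p.2, p.2) else (p.1, apex p.1 p.2)

lemma IsBoundaryEdge.swap (h : IsBoundaryEdge S p) : IsBoundaryEdge Sᶜ p.swap :=
  ⟨h.1.symm, h.2.2, not_not.2 h.2.1⟩

lemma isBoundaryEdge_nextEdge (h : IsBoundaryEdge S p) : IsBoundaryEdge S (nextEdge S p) := by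
  obtain ⟨hadj, h1, h2⟩ := h
  have htri := isTriangle_apex hadj
  unfold nextEdge
  split_ifs with hc
  · exact ⟨htri.rotate.adj_left.symm, hc, h2⟩
  · exact ⟨htri.adj_right, h1, hc⟩

lemma nextEdge_compl_swap_nextEdge (h : IsBoundaryEdge S p) :
    nextEdge Sᶜ (nextEdge S p).swap = p.swap := by
  obtain ⟨hadj, h1, h2⟩ := h
  have htri := isTriangle_apex hadj
  have hr := htri.rotate.2
  have hl := htri.rotate.rotate.2
  by_cases hc : apex p.1 p.2 ∈ S
  · simp [nextEdge, hc, ← hr, h1, Prod.swap]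
  · simp [nextEdge, hc, ← hl, h2, Prod.swap]

/-- The permutation `nextEdge` of the boundary edges. Its inverse turns around the triangle on the
right, and is `nextEdge` for the complement of `S` and the reversed edges. -/
def boundaryPerm (S : Set (ℤ × ℤ)) : Equiv.Perm {p // IsBoundaryEdge S p} where
  toFun p := ⟨nextEdge S p, isBoundaryEdge_nextEdge p.2⟩
  invFun p := ⟨(nextEdge Sᶜ p.1.swap).swap, by
    simpa using (isBoundaryEdge_nextEdge p.2.swap).swap⟩
  left_inv p := by
    ext1
    simp [nextEdge_compl_swap_nextEdge p.2]
  right_inv p := by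
    ext1
    simpa using congrArg Prod.swap (nextEdge_compl_swap_nextEdge p.2.swap)

open Classical in
/-- The signed indicator of a set of oriented edges, as a cochain. -/
def edgeCochain (E : Set ((ℤ × ℤ) × (ℤ × ℤ))) (a b : ℤ × ℤ) : ℤ :=
  (if (a, b) ∈ E then 1 else 0) - if (b, a) ∈ E then 1 else 0

lemma edgeCochain_swap (E : Set ((ℤ × ℤ) × (ℤ × ℤ))) (a b : ℤ × ℤ) :
    edgeCochain E b a = -edgeCochain E a b := by
  simp [edgeCochain]

lemma edgeCochain_eq_zero (hE : ∀ p ∈ E, IsBoundaryEdge S p) (hab : a ∈ S ↔ b ∈ S) :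
    edgeCochain E a b = 0 := by
  have h1 : (a, b) ∉ E := fun h => (hE _ h).2.2 (hab.1 (hE _ h).2.1)
  have h2 : (b, a) ∉ E := fun h => (hE _ h).2.2 (hab.2 (hE _ h).2.1)
  simp [edgeCochain, h1, h2]

open Classical in
lemma edgeCochain_eq_ite (hE : ∀ p ∈ E, IsBoundaryEdge S p) (ha : a ∈ S) :
    edgeCochain E a b = if (a, b) ∈ E then 1 else 0 := by
  have h : (b, a) ∉ E := fun h => (hE _ h).2.2 ha
  simp [edgeCochain, h]

lemma edgeCochain_triangle (hE : ∀ p ∈ E, IsBoundaryEdge S p)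
    (hinv : ∀ p, IsBoundaryEdge S p → (nextEdge S p ∈ E ↔ p ∈ E)) (h : IsTriangle a b c) :
    edgeCochain E a b + edgeCochain E b c + edgeCochain E c a = 0 := by
  have crossing {a b c : ℤ × ℤ} (h : IsTriangle a b c) (ha : a ∈ S) (hb : b ∉ S) :
      edgeCochain E a b + edgeCochain E b c + edgeCochain E c a = 0 := by
    have hab : IsBoundaryEdge S (a, b) := ⟨h.adj_left, ha, hb⟩
    by_cases hc : c ∈ S
    · have hnext : (c, b) ∈ E ↔ (a, b) ∈ E := by
        simpa [nextEdge, ← h.2, hc] using hinv _ hab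
      rw [edgeCochain_eq_zero hE (iff_of_true hc ha), edgeCochain_swap E c b,
        edgeCochain_eq_ite hE ha, edgeCochain_eq_ite hE hc]
      grind
    · have hnext : (a, c) ∈ E ↔ (a, b) ∈ E := by
        simpa [nextEdge, ← h.2, hc] using hinv _ hab
      rw [edgeCochain_eq_zero hE (iff_of_false hb hc), edgeCochain_swap E a c,
        edgeCochain_eq_ite hE ha, edgeCochain_eq_ite hE ha]
      grind
  by_cases ha : a ∈ S <;> by_cases hb : b ∈ S <;> by_cases hc : c ∈ S
  · simp [edgeCochain_eq_zero hE, *]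
  · linarith [crossing h.rotate hb hc]
  · exact crossing h ha hb
  · exact crossing h ha hb
  · linarith [crossing h.rotate.rotate hc ha]
  · linarith [crossing h.rotate hb hc]
  · linarith [crossing h.rotate.rotate hc ha]
  · simp [edgeCochain_eq_zero hE, *]

/-- The edges of `E` are dual to a cocycle, hence to the coboundary of a function, which is constant
on `S` and on its complement. -/
theorem mem_of_nextEdge_invariant (hS : IsGraphConnected triLattice S)
    (hSc : IsGraphConnected triLattice Sᶜ) (hE : ∀ p ∈ E, IsBoundaryEdge S p)
    (hinv : ∀ p, IsBoundaryEdge S p → (nextEdge S p ∈ E ↔ p ∈ E)) (hd : d ∈ E)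
    (he : IsBoundaryEdge S e) : e ∈ E := by
  obtain ⟨χ, hχ⟩ := exists_potential_of_cocycle (edgeCochain_swap E)
    fun a b c => edgeCochain_triangle hE hinv
  have constant {R : Set (ℤ × ℤ)} (hR : IsGraphConnected triLattice R)
      (hRS : ∀ a ∈ R, ∀ b ∈ R, (a ∈ S ↔ b ∈ S)) {a b : ℤ × ℤ} (ha : a ∈ R) (hb : b ∈ R) :
      χ b = χ a := by
    induction (SimpleGraph.reachable_iff_reflTransGen a b).1 (hR ha hb) with
    | refl => rfl
    | @tail x y _ hxy ih =>
      obtain ⟨hadj, hx, hy⟩ := spanningCoe_induce_adj.1 hxy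
      rw [hχ x y hadj, edgeCochain_eq_zero hE (hRS x hx y hy), add_zero, ih hx]
  have hd' := hE d hd
  have h1 := constant hS (fun a ha b hb => iff_of_true ha hb) hd'.2.1 he.2.1
  have h2 := constant hSc (fun a ha b hb => iff_of_false ha hb) hd'.2.2 he.2.2
  rw [hχ _ _ hd'.1, hχ _ _ he.1, h1, add_right_inj, edgeCochain_eq_ite hE he.2.1,
    edgeCochain_eq_ite hE hd'.2.1, if_pos hd] at h2
  by_contra hneg
  simp [hneg] at h2

theorem sameCycle_boundaryPerm (hS : IsGraphConnected triLattice S)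
    (hSc : IsGraphConnected triLattice Sᶜ) (d e : {p // IsBoundaryEdge S p}) :
    (boundaryPerm S).SameCycle d e := by
  obtain ⟨_, h⟩ := mem_of_nextEdge_invariant hS hSc
    (E := {p | ∃ hp : IsBoundaryEdge S p, (boundaryPerm S).SameCycle d ⟨p, hp⟩})
    (fun p hp => hp.1)
    (fun p hp => by
      have := Equiv.Perm.sameCycle_apply_right (f := boundaryPerm S) (x := d) (y := ⟨p, hp⟩)
      exact ⟨fun h => ⟨hp, this.1 h.2⟩, fun h => ⟨isBoundaryEdge_nextEdge hp, this.2 h.2⟩⟩)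
    ⟨d.2, .refl _ _⟩ e.2
  exact h

end BoundaryEdge

/-! ### Infinite cycles and polygonal paths -/

section Cycle

variable {α : Type*} {σ : Equiv.Perm α} {x : α}

lemma bijective_zpow_apply_of_sameCycle [Infinite α] (hσ : ∀ y, σ.SameCycle x y) :
    Function.Bijective fun n : ℤ => (σ ^ n) x := by
  refine ⟨.of_lt_imp_ne fun m n hmn heq => ?_, hσ⟩
  set k := n - m
  have hk : 0 < k := sub_pos.2 hmn
  have hfix : (σ ^ k) x = x := by
    refine (σ ^ m).injective ?_
    rw [← Equiv.Perm.mul_apply, ← zpow_add, add_sub_cancel]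
    exact heq.symm
  refine infinite_univ (((finite_Ico 0 k).image fun n : ℤ => (σ ^ n) x).subset fun y _ => ?_)
  obtain ⟨i, rfl⟩ := hσ y
  refine ⟨i % k, ⟨Int.emod_nonneg _ hk.ne', Int.emod_lt_of_pos _ hk⟩, ?_⟩
  nth_rw 2 [← Int.emod_add_mul_ediv i k]
  rw [zpow_add, zpow_mul, Equiv.Perm.mul_apply,
    Equiv.Perm.zpow_apply_eq_self_of_apply_eq_self hfix]

end Cycle

section PolygonalPath

variable {E : Type*} [AddCommGroup E] [Module ℝ E] {m : ℤ → E}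

/-- The path `ℝ → E` which takes the value `m n` at each integer `n` and is affine in between. -/
def polygonalPath (m : ℤ → E) (t : ℝ) : E :=
  AffineMap.lineMap (m ⌊t⌋) (m (⌊t⌋ + 1)) (Int.fract t)

lemma polygonalPath_of_mem_Icc {n : ℤ} {t : ℝ} (ht : t ∈ Icc (n : ℝ) (n + 1)) :
    polygonalPath m t = AffineMap.lineMap (m n) (m (n + 1)) (t - n) := by
  rcases ht.2.lt_or_eq with h | rfl
  · rw [polygonalPath, Int.fract, Int.floor_eq_iff.2 ⟨ht.1, h⟩]
  · simp [polygonalPath]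

lemma polygonalPath_mem_segment {n : ℤ} {t : ℝ} (ht : t ∈ Icc (n : ℝ) (n + 1)) :
    polygonalPath m t ∈ segment ℝ (m n) (m (n + 1)) := by
  rw [segment_eq_image_lineMap, polygonalPath_of_mem_Icc ht]
  exact mem_image_of_mem _ ⟨by linarith [ht.1], by linarith [ht.2]⟩

lemma range_polygonalPath (m : ℤ → E) :
    range (polygonalPath m) = ⋃ n, segment ℝ (m n) (m (n + 1)) := by
  refine Subset.antisymm ?_ (iUnion_subset fun n => ?_)
  · rintro _ ⟨t, rfl⟩
    exact mem_iUnion.2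
      ⟨⌊t⌋, polygonalPath_mem_segment ⟨Int.floor_le t, (Int.lt_floor_add_one t).le⟩⟩
  · rw [segment_eq_image_lineMap]
    rintro _ ⟨s, hs, rfl⟩
    refine ⟨n + s, ?_⟩
    rw [polygonalPath_of_mem_Icc (n := n) ⟨by linarith [hs.1], by linarith [hs.2]⟩,
      add_sub_cancel_left]

lemma locallyFinite_Icc_intCast : LocallyFinite fun n : ℤ => Icc (n : ℝ) (n + 1) := by
  intro x
  refine ⟨Metric.closedBall x 1, Metric.closedBall_mem_nhds x one_pos, ?_⟩
  have hfin : ((↑) ⁻¹' Icc (x - 2) (x + 1) : Set ℤ).Finite := by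
    rw [Int.preimage_Icc]
    exact finite_Icc _ _
  refine hfin.subset ?_
  rintro n ⟨y, hy, hyx⟩
  rw [Real.closedBall_eq_Icc] at hyx
  exact ⟨by linarith [hy.2, hyx.1], by linarith [hy.1, hyx.2]⟩

variable [TopologicalSpace E] [IsTopologicalAddGroup E] [ContinuousSMul ℝ E]

lemma continuous_polygonalPath (m : ℤ → E) : Continuous (polygonalPath m) := by
  refine locallyFinite_Icc_intCast.continuous (iUnion_Icc_intCast ℝ) (fun n => isClosed_Icc)
    fun n => ?_
  have h : Continuous fun t : ℝ => AffineMap.lineMap (k := ℝ) (m n) (m (n + 1)) (t - n) :=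
    AffineMap.lineMap_continuous.comp (by fun_prop)
  exact h.continuousOn.congr fun t ht => polygonalPath_of_mem_Icc ht

lemma isProperMap_polygonalPath [T2Space E] [WeaklyLocallyCompactSpace E]
    (hm : LocallyFinite fun n => segment ℝ (m n) (m (n + 1))) :
    IsProperMap (polygonalPath m) := by
  refine isProperMap_iff_isCompact_preimage.2 ⟨continuous_polygonalPath m, fun {K} hK => ?_⟩
  have hcompact := (hm.finite_nonempty_inter_compact hK).isCompact_biUnion
    fun n _ => isCompact_Icc (a := (n : ℝ)) (b := n + 1)
  refine hcompact.of_isClosed_subset (hK.isClosed.preimage (continuous_polygonalPath m))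
    fun t ht => ?_
  have htn : t ∈ Icc (⌊t⌋ : ℝ) (⌊t⌋ + 1) := ⟨Int.floor_le t, (Int.lt_floor_add_one t).le⟩
  exact mem_biUnion (show ⌊t⌋ ∈ _ from ⟨_, polygonalPath_mem_segment htn, ht⟩) htn

end PolygonalPath

/-! ### The zero set of a level function -/

section ZeroSet

variable {S : Set (ℤ × ℤ)} {a b c a' b' c' : ℤ × ℤ} {p p' : (ℤ × ℤ) × (ℤ × ℤ)} {z : Plane}
  {α β γ α' β' γ' s s' : ℝ}

/-- The midpoint of the lattice edge `p`, where the zero set of `level S` crosses it if `p` is a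
boundary edge of `S`. -/
def edgeMidpoint (p : (ℤ × ℤ) × (ℤ × ℤ)) : Plane :=
  midpoint ℝ (latticePoint p.1) (latticePoint p.2)

/-- The point of the zero set of `level S` with parameter `s ∈ [0, 1]` in the triangle on the left
of the boundary edge `p`. -/
def zeroPoint (S : Set (ℤ × ℤ)) (p : (ℤ × ℤ) × (ℤ × ℤ)) (s : ℝ) : Plane :=
  AffineMap.lineMap (edgeMidpoint p) (edgeMidpoint (nextEdge S p)) s

lemma zeroPoint_of_mem (h : apex p.1 p.2 ∈ S) : zeroPoint S p s =
    ((1 - s) / 2) • latticePoint p.1 + (1 / 2 : ℝ) • latticePoint p.2 +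
      (s / 2) • latticePoint (apex p.1 p.2) := by
  simp only [zeroPoint, nextEdge, h, if_true, edgeMidpoint, AffineMap.lineMap_apply_module,
    midpoint_eq_smul_add, invOf_eq_inv]
  module

lemma zeroPoint_of_notMem (h : apex p.1 p.2 ∉ S) : zeroPoint S p s =
    (1 / 2 : ℝ) • latticePoint p.1 + ((1 - s) / 2) • latticePoint p.2 +
      (s / 2) • latticePoint (apex p.1 p.2) := by
  simp only [zeroPoint, nextEdge, h, if_false, edgeMidpoint, AffineMap.lineMap_apply_module,
    midpoint_eq_smul_add, invOf_eq_inv]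
  module

lemma IsBoundaryEdge.exists_isBarycentric_zeroPoint (hp : IsBoundaryEdge S p) (hs : s ∈ Icc 0 1) :
    ∃ α β, IsBarycentric (zeroPoint S p s) p.1 p.2 (apex p.1 p.2) α β (s / 2) ∧
      level S (zeroPoint S p s) = 0 ∧ (s < 1 → 0 < α ∧ 0 < β) := by
  have htri := isTriangle_apex hp.1
  obtain ⟨h0, h1⟩ := hs
  by_cases hc : apex p.1 p.2 ∈ S
  · have h : IsBarycentric (zeroPoint S p s) p.1 p.2 (apex p.1 p.2) ((1 - s) / 2) (1 / 2) (s / 2) :=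
      ⟨htri, by linarith, by norm_num, by linarith, by ring, zeroPoint_of_mem hc⟩
    refine ⟨_, _, h, ?_, fun hs => ⟨by linarith, by norm_num⟩⟩
    rw [h.level_eq, latticeSign_of_mem hp.2.1, latticeSign_of_notMem hp.2.2, latticeSign_of_mem hc]
    ring
  · have h : IsBarycentric (zeroPoint S p s) p.1 p.2 (apex p.1 p.2) (1 / 2) ((1 - s) / 2) (s / 2) :=
      ⟨htri, by norm_num, by linarith, by linarith, by ring, zeroPoint_of_notMem hc⟩
    refine ⟨_, _, h, ?_, fun hs => ⟨by norm_num, by linarith⟩⟩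
    rw [h.level_eq, latticeSign_of_mem hp.2.1, latticeSign_of_notMem hp.2.2,
      latticeSign_of_notMem hc]
    ring

lemma IsBarycentric.exists_zeroPoint_eq (h : IsBarycentric z a b c α β γ) (hz : level S z = 0)
    (ha : a ∈ S) (hb : b ∉ S) : ∃ s ∈ Icc (0 : ℝ) 1, zeroPoint S (a, b) s = z := by
  have hsum := h.add_eq_one
  rw [h.level_eq, latticeSign_of_mem ha, latticeSign_of_notMem hb] at hz
  obtain rfl := h.isTriangle.2
  by_cases hc : apex a b ∈ S
  · rw [latticeSign_of_mem hc] at hz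
    refine ⟨2 * γ, ⟨by linarith [h.nonneg_right], by linarith [h.nonneg_left]⟩, ?_⟩
    rw [zeroPoint_of_mem hc, h.eq_add, show β = 1 / 2 by linarith,
      show α = (1 - 2 * γ) / 2 by linarith, mul_div_cancel_left₀ _ two_ne_zero]
  · rw [latticeSign_of_notMem hc] at hz
    refine ⟨2 * γ, ⟨by linarith [h.nonneg_right], by linarith [h.nonneg_mid]⟩, ?_⟩
    rw [zeroPoint_of_notMem hc, h.eq_add, show α = 1 / 2 by linarith,
      show β = (1 - 2 * γ) / 2 by linarith, mul_div_cancel_left₀ _ two_ne_zero]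

lemma exists_zeroPoint_eq (hz : level S z = 0) :
    ∃ p, IsBoundaryEdge S p ∧ ∃ s ∈ Icc (0 : ℝ) 1, zeroPoint S p s = z := by
  obtain ⟨a, b, c, α, β, γ, h⟩ := exists_isBarycentric z
  by_cases hab : a ∈ S ∧ b ∉ S
  · exact ⟨_, ⟨h.isTriangle.adj_left, hab⟩, h.exists_zeroPoint_eq hz hab.1 hab.2⟩
  by_cases hbc : b ∈ S ∧ c ∉ S
  · exact ⟨_, ⟨h.rotate.isTriangle.adj_left, hbc⟩, h.rotate.exists_zeroPoint_eq hz hbc.1 hbc.2⟩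
  by_cases hca : c ∈ S ∧ a ∉ S
  · exact ⟨_, ⟨h.rotate.rotate.isTriangle.adj_left, hca⟩,
      h.rotate.rotate.exists_zeroPoint_eq hz hca.1 hca.2⟩
  have hsum := h.add_eq_one
  rw [h.level_eq] at hz
  grind [latticeSign]

lemma setOf_level_eq_zero (S : Set (ℤ × ℤ)) : {z | level S z = 0} =
    ⋃ p : {p // IsBoundaryEdge S p}, segment ℝ (edgeMidpoint p) (edgeMidpoint (nextEdge S p)) := by
  simp only [segment_eq_image_lineMap]
  refine Subset.antisymm (fun z hz => ?_) (iUnion_subset ?_)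
  · obtain ⟨p, hp, s, hs, rfl⟩ := exists_zeroPoint_eq hz
    exact mem_iUnion.2 ⟨⟨p, hp⟩, s, hs, rfl⟩
  · rintro ⟨p, hp⟩ _ ⟨s, hs, rfl⟩
    obtain ⟨_, _, -, h, -⟩ := hp.exists_isBarycentric_zeroPoint hs
    exact h

lemma locallyFinite_segment_edgeMidpoint (S : Set (ℤ × ℤ)) :
    LocallyFinite fun p : {p // IsBoundaryEdge S p} =>
      segment ℝ (edgeMidpoint p) (edgeMidpoint (nextEdge S p)) := by
  intro z
  refine ⟨Metric.ball z 1, Metric.ball_mem_nhds z one_pos, ?_⟩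
  have hfin := finite_setOf_dist_latticePoint_le z 2
  refine .of_finite_image ((hfin.prod hfin).subset ?_) Subtype.val_injective.injOn
  rintro _ ⟨⟨p, hp⟩, ⟨w, hw, hwz⟩, rfl⟩
  obtain ⟨s, hs, rfl⟩ := (segment_eq_image_lineMap ℝ _ _).subset hw
  obtain ⟨_, _, h, -, -⟩ := hp.exists_isBarycentric_zeroPoint hs
  have hw : dist (zeroPoint S p s) z < 1 := hwz
  constructor
  · change dist (latticePoint p.1) z ≤ 2
    linarith [h.dist_le_one, dist_triangle (latticePoint p.1) (zeroPoint S p s) z]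
  · change dist (latticePoint p.2) z ≤ 2
    linarith [h.rotate.dist_le_one, dist_triangle (latticePoint p.2) (zeroPoint S p s) z]

lemma infinite_isBoundaryEdge (h : ¬ Bornology.IsBounded {z | level S z = 0}) :
    Infinite {p // IsBoundaryEdge S p} := by
  refine not_finite_iff_infinite.1 fun hfin => h ?_
  rw [setOf_level_eq_zero]
  refine (isCompact_iUnion fun p => ?_).isBounded
  rw [segment_eq_image_lineMap]
  exact isCompact_Icc.image AffineMap.lineMap_continuous

lemma IsTriangle.not_flip (h : IsTriangle a b c) : ¬ IsTriangle c b a := by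
  intro h'
  obtain ⟨a1, a2⟩ := a; obtain ⟨b1, b2⟩ := b; obtain ⟨c1, c2⟩ := c
  simp only [IsTriangle, triLattice_adj_iff, apex, Prod.mk.injEq] at *
  omega

lemma IsTriangle.eq_and_eq_of_mem (h : IsTriangle a b c) (h' : IsTriangle a' b' c')
    (hab' : a ≠ b') (hba' : b ≠ a') (ha : a = a' ∨ a = b' ∨ a = c') (hb : b = a' ∨ b = b' ∨ b = c')
    (ha' : a' = a ∨ a' = b ∨ a' = c) (hb' : b' = a ∨ b' = b ∨ b' = c) : a = a' ∧ b = b' := by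
  have := h.not_flip
  have := h.rotate.not_flip
  have := h'.rotate
  have := h.adj_left.ne
  have := h'.adj_left.ne
  have := h'.rotate.rotate
  grind

namespace IsBarycentric

lemma hexHat_left (h : IsBarycentric z a b c α β γ) : hexHat (z.1 - a.1) (z.2 - a.2) = α := by
  rw [h.hexHat_eq, if_pos rfl, if_neg h.isTriangle.adj_left.ne, if_neg h.isTriangle.adj_right.ne]
  ring

lemma mem_of_pos (h : IsBarycentric z a b c α β γ) (h' : IsBarycentric z a' b' c' α' β' γ')
    (hα : 0 < α) : a = a' ∨ a = b' ∨ a = c' := by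
  have := h.hexHat_left
  rw [h'.hexHat_eq] at this
  grind

end IsBarycentric

lemma zeroPoint_inj (hp : IsBoundaryEdge S p) (hp' : IsBoundaryEdge S p') (hs : s ∈ Ico 0 1)
    (hs' : s' ∈ Ico 0 1) (heq : zeroPoint S p s = zeroPoint S p' s') : p = p' ∧ s = s' := by
  obtain ⟨α, β, h, -, hpos⟩ := hp.exists_isBarycentric_zeroPoint (Ico_subset_Icc_self hs)
  obtain ⟨α', β', h', -, hpos'⟩ := hp'.exists_isBarycentric_zeroPoint (Ico_subset_Icc_self hs')
  rw [← heq] at h'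
  have ha := h.mem_of_pos h' (hpos hs.2).1
  have hb := h.rotate.mem_of_pos h' (hpos hs.2).2
  have ha' := h'.mem_of_pos h (hpos' hs'.2).1
  have hb' := h'.rotate.mem_of_pos h (hpos' hs'.2).2
  obtain rfl : p = p' := by
    obtain ⟨h1, h2⟩ := h.isTriangle.eq_and_eq_of_mem h'.isTriangle
      (fun heq => hp'.2.2 (heq ▸ hp.2.1)) (fun heq => hp.2.2 (heq ▸ hp'.2.1)) ha hb ha' hb'
    exact Prod.ext h1 h2
  refine ⟨rfl, ?_⟩
  linarith [h.rotate.rotate.hexHat_left, h'.rotate.rotate.hexHat_left]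

theorem exists_isClosedEmbedding_range_eq_level_zero (hS : IsGraphConnected triLattice S)
    (hSc : IsGraphConnected triLattice Sᶜ) (hunbdd : ¬ Bornology.IsBounded {z | level S z = 0}) :
    ∃ Γ : ℝ → Plane, IsClosedEmbedding Γ ∧ range Γ = {z | level S z = 0} := by
  have := infinite_isBoundaryEdge hunbdd
  obtain ⟨p₀⟩ : Nonempty {p // IsBoundaryEdge S p} := inferInstance
  set e : ℤ → {p // IsBoundaryEdge S p} := fun n => (boundaryPerm S ^ n) p₀
  have he : Function.Bijective e :=
    bijective_zpow_apply_of_sameCycle (sameCycle_boundaryPerm hS hSc p₀)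
  have hsucc (n : ℤ) : (e (n + 1)).1 = nextEdge S (e n) := by
    simp only [e, add_comm n, zpow_one_add, Equiv.Perm.mul_apply]
    rfl
  set m : ℤ → Plane := fun n => edgeMidpoint (e n)
  have hlf : LocallyFinite fun n => segment ℝ (m n) (m (n + 1)) := by
    simpa only [m, hsucc, Function.comp_def] using
      (locallyFinite_segment_edgeMidpoint S).comp_injective he.1
  have hinj : Function.Injective (polygonalPath m) := by
    intro t t' heq
    simp only [polygonalPath, m, hsucc] at heq
    obtain ⟨hfloor, hfract⟩ := zeroPoint_inj (e ⌊t⌋).2 (e ⌊t'⌋).2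
      ⟨Int.fract_nonneg t, Int.fract_lt_one t⟩ ⟨Int.fract_nonneg t', Int.fract_lt_one t'⟩ heq
    rw [← Int.floor_add_fract t, ← Int.floor_add_fract t', hfract, he.1 (Subtype.ext hfloor)]
  refine ⟨polygonalPath m, .of_continuous_injective_isClosedMap (continuous_polygonalPath m) hinj
    (isProperMap_polygonalPath hlf).isClosedMap, ?_⟩
  rw [range_polygonalPath, setOf_level_eq_zero, ← he.2.iUnion_comp]
  simp only [m, hsucc]

end ZeroSet

/-! ### Radial stretching -/

section Radial

variable {E : Type*} [NormedAddCommGroup E] [NormedSpace ℝ E] {κ : ℝ → ℝ}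

/-- The radial map of `E` which multiplies vectors of norm `r` by `κ r`. -/
def radialScaling (κ : ℝ → ℝ) (z : E) : E := κ ‖z‖ • z

lemma mul_dist_le_dist_radialScaling (hmono : MonotoneOn κ (Ici 0)) (h₀ : 0 ≤ κ 0) {z w : E}
    (hzw : ‖z‖ ≤ ‖w‖) :
    κ ‖z‖ * dist z w ≤ 2 * dist (radialScaling κ z) (radialScaling κ w) := by
  have hz : 0 ≤ κ ‖z‖ := h₀.trans (hmono self_mem_Ici (norm_nonneg z) (norm_nonneg z))
  have hw : κ ‖z‖ ≤ κ ‖w‖ := hmono (norm_nonneg z) (norm_nonneg w) hzw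
  rw [dist_comm, dist_comm (radialScaling κ z), dist_eq_norm, dist_eq_norm]
  set d := radialScaling κ w - radialScaling κ z
  have hsplit : κ ‖z‖ * ‖w - z‖ ≤ ‖d‖ + (κ ‖w‖ - κ ‖z‖) * ‖w‖ := calc
    κ ‖z‖ * ‖w - z‖ = ‖d - (κ ‖w‖ - κ ‖z‖) • w‖ := by
      rw [← Real.norm_of_nonneg hz, ← norm_smul, Real.norm_of_nonneg hz]
      congr 1
      simp only [d, radialScaling]
      module
    _ ≤ _ := norm_sub_le_of_le le_rfl (by rw [norm_smul, Real.norm_of_nonneg (sub_nonneg.2 hw)])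
  have hnorm : κ ‖w‖ * ‖w‖ - κ ‖z‖ * ‖z‖ ≤ ‖d‖ := by
    simpa only [d, radialScaling, norm_smul, Real.norm_of_nonneg hz,
      Real.norm_of_nonneg (hz.trans hw)]
      using norm_sub_norm_le (radialScaling κ w) (radialScaling κ z)
  nlinarith

lemma exists_homeomorph_coe_eq_radialScaling (hκ : Continuous κ) (hmono : MonotoneOn κ (Ici 0))
    (h₁ : 1 ≤ κ 0) : ∃ R : E ≃ₜ E, ⇑R = radialScaling κ := by
  have hone (z : E) : 1 ≤ κ ‖z‖ := h₁.trans (hmono self_mem_Ici (norm_nonneg z) (norm_nonneg z))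
  have hle {z w : E} (hzw : ‖z‖ ≤ ‖w‖) :
      dist z w ≤ 2 * dist (radialScaling κ z) (radialScaling κ w) :=
    (le_mul_of_one_le_left dist_nonneg (hone z)).trans
      (mul_dist_le_dist_radialScaling hmono (zero_le_one.trans h₁) hzw)
  have hanti : AntilipschitzWith 2 (radialScaling κ : E → E) := .of_le_mul_dist fun z w =>
    (le_total ‖z‖ ‖w‖).elim hle fun h => by
      rw [dist_comm, dist_comm (radialScaling κ z)]
      exact hle h
  have hsurj : Function.Surjective (radialScaling κ : E → E) := by
    intro w
    have hcont : ContinuousOn (fun t : ℝ => κ ‖t • w‖ * t) (Icc 0 1) := by fun_prop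
    obtain ⟨t, -, ht⟩ := intermediate_value_Icc zero_le_one hcont
      (show (1 : ℝ) ∈ _ from ⟨by simp, by simpa using hone w⟩)
    exact ⟨t • w, by simp only [radialScaling, smul_smul, ht, one_smul]⟩
  let e := Equiv.ofBijective _ ⟨hanti.injective, hsurj⟩
  exact ⟨⟨e, (hκ.comp continuous_norm).smul continuous_id,
    (hanti.to_rightInverse e.apply_symm_apply).continuous⟩, rfl⟩

variable [ProperSpace E]

lemma exists_monotoneOn_le_comp_norm {φ : E → ℝ} (hφ : Continuous φ) :
    ∃ κ : ℝ → ℝ, Continuous κ ∧ MonotoneOn κ (Ici 0) ∧ ∀ z, φ z ≤ κ ‖z‖ := by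
  have hK : IsCompact (Metric.closedBall (0 : E) 1) := isCompact_closedBall 0 1
  have hbdd (r : ℝ) : BddAbove ((fun v => φ (r • v)) '' Metric.closedBall 0 1) :=
    (hK.image (by fun_prop)).bddAbove
  refine ⟨fun r => sSup ((fun v => φ (r • v)) '' Metric.closedBall 0 1),
    hK.continuous_sSup (by fun_prop), fun r hr s hs hrs => ?_, fun z => ?_⟩
  · refine csSup_le_csSup (hbdd s) ⟨_, 0, by simp, rfl⟩ ?_
    rintro _ ⟨v, hv, rfl⟩
    rcases (mem_Ici.1 hs).eq_or_lt with rfl | hs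
    · exact ⟨v, hv, by rw [le_antisymm hrs hr]⟩
    · refine ⟨(r / s) • v, ?_, by simp only [smul_smul, mul_div_cancel₀ _ hs.ne']⟩
      rw [mem_closedBall_zero_iff] at hv ⊢
      rw [norm_smul, Real.norm_of_nonneg (div_nonneg hr hs.le)]
      exact mul_le_one₀ (div_le_one_of_le₀ hrs hs.le) (norm_nonneg v) hv
  · refine le_csSup (hbdd _) ?_
    rcases eq_or_ne z 0 with rfl | hz
    · exact ⟨0, by simp, by simp⟩
    · exact ⟨‖z‖⁻¹ • z, by simp [norm_smul, hz], by simp [smul_smul, hz]⟩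

theorem exists_homeomorph_lt_dist {A B : Set E} (hA : IsClosed A) (hB : IsClosed B)
    (hAB : Disjoint A B) (hneA : A.Nonempty) (hneB : B.Nonempty) {r : ℝ} (hr : 0 ≤ r) :
    ∃ R : E ≃ₜ E, ∀ a ∈ A, ∀ b ∈ B, r < dist (R a) (R b) := by
  set h : E → ℝ := fun z => Metric.infDist z A + Metric.infDist z B
  have hpos (z : E) : 0 < h z := by
    by_cases hz : z ∈ A
    · exact add_pos_of_nonneg_of_pos Metric.infDist_nonneg
        ((hB.notMem_iff_infDist_pos hneB).1 (hAB.notMem_of_mem_left hz))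
    · exact add_pos_of_pos_of_nonneg ((hA.notMem_iff_infDist_pos hneA).1 hz) Metric.infDist_nonneg
  have hdist {a b : E} (ha : a ∈ A) (hb : b ∈ B) : h a ≤ dist a b ∧ h b ≤ dist b a := by
    simp only [h, Metric.infDist_zero_of_mem ha, Metric.infDist_zero_of_mem hb, zero_add, add_zero]
    exact ⟨Metric.infDist_le_dist_of_mem hb, Metric.infDist_le_dist_of_mem ha⟩
  have hcont : Continuous fun z => 1 + 2 * r / h z :=
    continuous_const.add (continuous_const.div (by fun_prop) fun z => (hpos z).ne')
  obtain ⟨κ, hκ, hmono, hle⟩ := exists_monotoneOn_le_comp_norm hcont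
  have hκ₀ : 1 ≤ κ 0 := by
    rw [← norm_zero (E := E)]
    exact le_trans (le_add_of_nonneg_right (div_nonneg (by positivity) (hpos 0).le)) (hle 0)
  obtain ⟨R, hR⟩ := exists_homeomorph_coe_eq_radialScaling (E := E) hκ hmono hκ₀
  have hlt {z w : E} (hzw : ‖z‖ ≤ ‖w‖) (hd : h z ≤ dist z w) : r < dist (R z) (R w) := by
    rw [hR]
    have hscale := mul_dist_le_dist_radialScaling hmono (zero_le_one.trans hκ₀) hzw
    have hz : h z + 2 * r ≤ κ ‖z‖ * dist z w := calc
      h z + 2 * r = (1 + 2 * r / h z) * h z := by field_simp [(hpos z).ne']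
      _ ≤ κ ‖z‖ * dist z w := mul_le_mul (hle z) hd (hpos z).le
        ((add_nonneg zero_le_one (div_nonneg (by positivity) (hpos z).le)).trans (hle z))
    linarith [hpos z]
  refine ⟨R, fun a ha b hb => (le_total ‖a‖ ‖b‖).elim (fun h => hlt h (hdist ha hb).1) fun h => ?_⟩
  rw [dist_comm]
  exact hlt h (hdist ha hb).2

end Radial

/-! ### The two horizontal ends of the plane -/

section HorizontalEnd

variable {l : Filter ℝ} {A : Set Plane} {v : Plane → ℝ} {g : Plane ≃ₜ Plane}

/-- The deck transformation `Tr 1` as an element of the group of homeomorphisms of the plane. -/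
def shift : Plane ≃ₜ Plane := Homeomorph.addRight (1, 0)

lemma shift_zpow_apply (k : ℤ) (z : Plane) : (shift ^ k) z = Tr k z := by
  have htr (n : ℤ) (w : Plane) : shift (Tr n w) = Tr (n + 1) w := by
    simp [shift, Tr, add_assoc]
  induction k generalizing z with
  | zero => simp [Tr]
  | succ n ih => rw [add_comm, zpow_one_add, Homeomorph.mul_apply, ih, htr, add_comm]
  | pred n ih =>
    apply shift.injective
    rw [← Homeomorph.mul_apply, ← zpow_one_add, add_sub_cancel, ih, htr, sub_add_cancel]

lemma commute_shift_iff : Commute g shift ↔ ∀ z, g (Tr 1 z) = Tr 1 (g z) := by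
  simp only [← shift_zpow_apply, zpow_one]
  exact Homeomorph.ext_iff

lemma apply_Tr_of_commute (hg : Commute g shift) (k : ℤ) (z : Plane) : g (Tr k z) = Tr k (g z) := by
  rw [← shift_zpow_apply, ← shift_zpow_apply]
  exact DFunLike.congr_fun (hg.zpow_right k).eq z

/-- The filter on the plane of points `(x, y)` for which `x` tends to `l` and `y` stays bounded.
For `l = atBot` and `l = atTop` these are the west and the east end of the plane. -/
def horizontalEnd (l : Filter ℝ) : Filter Plane := ⨆ M : ℝ, l ×ˢ 𝓟 (Icc (-M) M)

lemma mem_horizontalEnd :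
    A ∈ horizontalEnd l ↔ ∀ M : ℝ, ∀ᶠ x in l, ∀ y ∈ Icc (-M) M, (x, y) ∈ A := by
  simp only [horizontalEnd, mem_iSup, mem_prod_principal]
  rfl

lemma tendsto_mk_horizontalEnd (l : Filter ℝ) (y : ℝ) :
    Tendsto (fun x => ((x, y) : Plane)) l (horizontalEnd l) := fun _ hA =>
  (mem_horizontalEnd.1 hA |y|).mono fun _ hx => hx y ⟨neg_abs_le y, le_abs_self y⟩

instance [l.NeBot] : (horizontalEnd l).NeBot := (tendsto_mk_horizontalEnd l 0).neBot

lemma mem_horizontalEnd_atBot_iff_reflection :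
    A ∈ horizontalEnd atBot ↔ Prod.map Neg.neg id ⁻¹' A ∈ horizontalEnd atTop := by
  simp only [mem_horizontalEnd, ← map_neg_atTop, eventually_map]
  rfl

lemma exists_isPreconnected_mem_horizontalEnd_atTop (hA : A ∈ horizontalEnd atTop) :
    ∃ E ⊆ A, IsPreconnected E ∧ E ∈ horizontalEnd atTop := by
  let D (z : Plane) : Set Plane := Ici z.1 ×ˢ Icc (-|z.2|) |z.2|
  have hD_self (z : Plane) : z ∈ D z := ⟨self_mem_Ici, abs_le.1 le_rfl⟩
  have hD_mono {z w : Plane} (hw : w ∈ D z) : D w ⊆ D z :=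
    prod_mono (Ici_subset_Ici.2 hw.1) (Icc_subset_Icc
      (neg_le_neg (abs_le.2 hw.2)) (abs_le.2 hw.2))
  have hD_sub {z : Plane} (hz : D z ⊆ A) : D z ⊆ {z | D z ⊆ A} := fun w hw => (hD_mono hw).trans hz
  refine ⟨{z | D z ⊆ A}, fun z hz => hz (hD_self z), ?_, mem_horizontalEnd.2 fun M => ?_⟩
  · refine isPreconnected_of_forall_pair fun z hz w hw => ⟨D z ∪ D w,
      union_subset (hD_sub hz) (hD_sub hw), .inl (hD_self z), .inr (hD_self w), ?_⟩
    refine IsPreconnected.union (max z.1 w.1, 0) ⟨?_, by simp⟩ ⟨?_, by simp⟩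
      (isPreconnected_Ici.prod isPreconnected_Icc) (isPreconnected_Ici.prod isPreconnected_Icc)
    · exact le_max_left z.1 w.1
    · exact le_max_right z.1 w.1
  · obtain ⟨X, hX⟩ := (mem_horizontalEnd.1 hA M).exists_forall_of_atTop
    filter_upwards [eventually_ge_atTop X] with x hx y hy
    rintro ⟨x', y'⟩ ⟨hx', hy'⟩
    exact hX x' (hx.trans hx') y' (abs_le.1 ((abs_le.2 hy').trans (abs_le.2 hy)))

lemma exists_isPreconnected_mem_horizontalEnd_atBot (hA : A ∈ horizontalEnd atBot) :
    ∃ E ⊆ A, IsPreconnected E ∧ E ∈ horizontalEnd atBot := by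
  obtain ⟨E, hE, hconn, hmem⟩ := exists_isPreconnected_mem_horizontalEnd_atTop
    (mem_horizontalEnd_atBot_iff_reflection.1 hA)
  refine ⟨Prod.map Neg.neg id '' E, image_subset_iff.2 hE, hconn.image _ (by fun_prop),
    mem_horizontalEnd_atBot_iff_reflection.2 (mem_of_superset hmem (subset_preimage_image _ _))⟩

lemma exists_forall_abs_fst_sub_le_of_commute (hg : Commute g shift) (M : ℝ) :
    ∃ R, ∀ z : Plane, z.2 ∈ Icc (-M) M → |(g z).1 - z.1| ≤ R ∧ |(g z).2| ≤ R := by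
  have hK : IsCompact (Icc (0 : ℝ) 1 ×ˢ Icc (-M) M) := isCompact_Icc.prod isCompact_Icc
  obtain ⟨R, hR⟩ := (hK.image g.continuous).isBounded.exists_norm_le
  refine ⟨R + 1, fun ⟨x, y⟩ hy => ?_⟩
  have hx₀ := Int.fract_nonneg x
  have hx₁ := Int.fract_lt_one x
  have hbound := hR (g (Int.fract x, y)) (mem_image_of_mem g ⟨⟨hx₀, hx₁.le⟩, hy⟩)
  rw [Prod.norm_def, sup_le_iff, Real.norm_eq_abs, Real.norm_eq_abs] at hbound
  have hgx : g (x, y) = Tr ⌊x⌋ (g (Int.fract x, y)) := by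
    rw [← apply_Tr_of_commute hg, Tr, Int.fract_add_floor]
  have hfloor := Int.floor_add_fract x
  simp only [hgx, Tr]
  grind

lemma tendsto_horizontalEnd_atTop_of_commute (hg : Commute g shift) :
    Tendsto g (horizontalEnd atTop) (horizontalEnd atTop) := fun A hA => by
  refine mem_horizontalEnd.2 fun M => ?_
  obtain ⟨R, hR⟩ := exists_forall_abs_fst_sub_le_of_commute hg M
  obtain ⟨X, hX⟩ := (mem_horizontalEnd.1 hA R).exists_forall_of_atTop
  filter_upwards [eventually_ge_atTop (X + R)] with x hx y hy
  obtain ⟨h₁, h₂⟩ := hR (x, y) hy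
  exact hX (g (x, y)).1 (by linarith [(abs_le.1 h₁).1]) _ (abs_le.1 h₂)

lemma tendsto_horizontalEnd_atBot_of_commute (hg : Commute g shift) :
    Tendsto g (horizontalEnd atBot) (horizontalEnd atBot) := fun A hA => by
  refine mem_horizontalEnd.2 fun M => ?_
  obtain ⟨R, hR⟩ := exists_forall_abs_fst_sub_le_of_commute hg M
  obtain ⟨X, hX⟩ := (mem_horizontalEnd.1 hA R).exists_forall_of_atBot
  filter_upwards [eventually_le_atBot (X - R)] with x hx y hy
  obtain ⟨h₁, h₂⟩ := hR (x, y) hy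
  exact hX (g (x, y)).1 (by linarith [(abs_le.1 h₁).2]) _ (abs_le.1 h₂)

lemma eventually_pos_horizontalEnd_atTop (hv : Continuous v) (hmono : ∀ z, v z ≤ v (Tr 1 z))
    (hpos : ∀ z, ∃ n : ℕ, 0 < v (Tr n z)) : ∀ᶠ z in horizontalEnd atTop, 0 < v z := by
  have hTr (z : Plane) : Monotone fun n : ℕ => v (Tr n z) := monotone_nat_of_le_succ fun n => by
    simpa [Tr, add_assoc] using hmono (Tr n z)
  have hcont (n : ℕ) : Continuous fun z => v (Tr n z) := by
    unfold Tr
    fun_prop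
  refine mem_horizontalEnd.2 fun M => ?_
  have hK : IsCompact (Icc (0 : ℝ) 1 ×ˢ Icc (-M) M) := isCompact_Icc.prod isCompact_Icc
  obtain ⟨N, hN⟩ := hK.elim_directed_cover (fun n : ℕ => {z | 0 < v (Tr n z)})
    (fun n => isOpen_lt continuous_const (hcont n)) (fun z _ => mem_iUnion.2 (hpos z))
    (directed_of_isDirected_le fun m n hmn z hz => hz.trans_le (hTr z hmn))
  filter_upwards [eventually_ge_atTop (N : ℝ)] with x hx y hy
  have hfract : 0 < v (Tr N (Int.fract x, y)) :=
    hN ⟨⟨Int.fract_nonneg x, (Int.fract_lt_one x).le⟩, hy⟩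
  have hfloor : (N : ℤ) ≤ ⌊x⌋ := Int.le_floor.2 (mod_cast hx)
  have hTr_floor : Tr ⌊x⌋.toNat (Int.fract x, y) = (x, y) := by
    rw [Int.toNat_of_nonneg (by lia), Tr, Int.fract_add_floor]
  exact hTr_floor ▸ hfract.trans_le (hTr _ (show N ≤ ⌊x⌋.toNat by lia))

lemma eventually_neg_horizontalEnd_atBot (hv : Continuous v) (hmono : ∀ z, v z ≤ v (Tr 1 z))
    (hneg : ∀ z, ∃ n : ℕ, v (Tr (-n) z) < 0) : ∀ᶠ z in horizontalEnd atBot, v z < 0 := by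
  have hTr (k : ℤ) (z : Plane) :
      Prod.map Neg.neg id (Tr k z) = Tr (-k) (Prod.map Neg.neg id z) := by
    simp [Tr, add_comm]
  refine mem_horizontalEnd_atBot_iff_reflection.2 ?_
  have h := eventually_pos_horizontalEnd_atTop (v := fun z => -v (Prod.map Neg.neg id z))
    (by fun_prop) (fun z => ?_) fun z => ?_
  · exact h.mono fun z hz => neg_pos.1 hz
  · have := hmono (Tr (-1) (Prod.map Neg.neg id z))
    rw [hTr]
    simpa [Tr, Prod.map_def] using this
  · obtain ⟨n, hn⟩ := hneg (Prod.map Neg.neg id z)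
    exact ⟨n, by rwa [hTr, neg_pos]⟩

end HorizontalEnd

/-! ### Essential lines trapped by homeomorphisms -/

section TrappedLine

/-- A continuous function on the plane which is negative near the west end and positive near the
east end. Its zero set separates the two ends, the function telling the sides apart. -/
structure SeparatesHorizontalEnds (G : Plane → ℝ) : Prop where
  continuous : Continuous G
  eventually_neg : ∀ᶠ z in horizontalEnd atBot, G z < 0
  eventually_pos : ∀ᶠ z in horizontalEnd atTop, 0 < G z

lemma SeparatesHorizontalEnds.exists_eq_zero {G : Plane → ℝ} (hG : SeparatesHorizontalEnds G)
    (y : ℝ) : ∃ x, G (x, y) = 0 := by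
  obtain ⟨x, hx⟩ := ((tendsto_mk_horizontalEnd atBot y).eventually hG.eventually_neg).exists
  obtain ⟨x', hx'⟩ := ((tendsto_mk_horizontalEnd atTop y).eventually hG.eventually_pos).exists
  have hcont : Continuous fun s : ℝ => G (s, y) := hG.continuous.comp (by fun_prop)
  exact mem_range_of_exists_le_of_exists_ge hcont ⟨x, hx.le⟩ ⟨x', hx'.le⟩

lemma tendsto_atTop_or_atBot_of_tendsto_abs {φ : ℝ → ℝ} (hφ : Continuous φ)
    (h : Tendsto (fun t => |φ t|) atTop atTop) :
    Tendsto φ atTop atTop ∨ Tendsto φ atTop atBot := by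
  obtain ⟨a, ha⟩ := (h.eventually_gt_atTop 0).exists_forall_of_atTop
  have hsign : (∀ t ∈ Ici a, 0 < φ t) ∨ ∀ t ∈ Ici a, φ t < 0 := by
    by_contra! ⟨⟨t, ht, hφt⟩, t', ht', hφt'⟩
    obtain ⟨s, hs, hφs⟩ :=
      isPreconnected_Ici.intermediate_value ht ht' hφ.continuousOn ⟨hφt, hφt'⟩
    exact abs_pos.1 (ha s hs) hφs
  refine hsign.imp (fun hpos => ?_) fun hneg => ?_
  · exact h.congr' ((eventually_ge_atTop a).mono fun t ht => abs_of_pos (hpos t ht))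
  · rw [← tendsto_neg_atTop_iff]
    exact h.congr' ((eventually_ge_atTop a).mono fun t ht => abs_of_neg (hneg t ht))

lemma tendsto_ends_of_surjective_of_tendsto_abs {φ : ℝ → ℝ} (hφ : Continuous φ)
    (hsurj : Function.Surjective φ) (h : Tendsto (fun t => |φ t|) (cocompact ℝ) atTop) :
    (Tendsto φ atTop atTop ∧ Tendsto φ atBot atBot) ∨
      (Tendsto φ atTop atBot ∧ Tendsto φ atBot atTop) := by
  have htop := tendsto_atTop_or_atBot_of_tendsto_abs hφ (h.mono_left atTop_le_cocompact)
  have hbot : Tendsto φ atBot atTop ∨ Tendsto φ atBot atBot := by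
    rw [← map_neg_atTop, tendsto_map'_iff, tendsto_map'_iff, map_neg_atTop]
    exact tendsto_atTop_or_atBot_of_tendsto_abs (hφ.comp continuous_neg)
      ((h.mono_left atBot_le_cocompact).comp tendsto_neg_atTop_atBot)
  have hnot_top : ¬ Tendsto φ (cocompact ℝ) atTop := fun hφtop => by
    obtain ⟨t, ht⟩ := hφ.exists_forall_le hφtop
    obtain ⟨s, hs⟩ := hsurj (φ t - 1)
    linarith [ht s]
  have hnot_bot : ¬ Tendsto φ (cocompact ℝ) atBot := fun hφbot => by
    obtain ⟨t, ht⟩ := hφ.exists_forall_ge hφbot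
    obtain ⟨s, hs⟩ := hsurj (φ t + 1)
    linarith [ht s]
  rw [cocompact_eq_atBot_atTop, tendsto_sup] at hnot_top hnot_bot
  tauto

lemma SeparatesHorizontalEnds.tendsto_abs_snd {G : Plane → ℝ} (hG : SeparatesHorizontalEnds G)
    {Γ : ℝ → Plane} (hΓ : IsClosedEmbedding Γ) (hΓG : ∀ t, G (Γ t) = 0) :
    Tendsto (fun t => |(Γ t).2|) (cocompact ℝ) atTop := by
  refine tendsto_atTop.2 fun M => ?_
  obtain ⟨X, hX⟩ := (mem_horizontalEnd.1 hG.eventually_neg M).exists_forall_of_atBot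
  obtain ⟨Y, hY⟩ := (mem_horizontalEnd.1 hG.eventually_pos M).exists_forall_of_atTop
  have hK : IsCompact (Icc X Y ×ˢ Icc (-M) M) := isCompact_Icc.prod isCompact_Icc
  filter_upwards [hΓ.tendsto_cocompact hK.compl_mem_cocompact] with t ht
  by_contra! hM
  have hsnd := abs_le.1 hM.le
  refine ht ⟨⟨?_, ?_⟩, hsnd⟩
  · exact le_of_not_ge fun hle => (hX _ hle _ hsnd).ne (hΓG t)
  · exact le_of_not_ge fun hle => (hY _ hle _ hsnd).ne' (hΓG t)

lemma SeparatesHorizontalEnds.exists_isEssLinePlane {G : Plane → ℝ}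
    (hG : SeparatesHorizontalEnds G) {Γ : ℝ → Plane} (hΓ : IsClosedEmbedding Γ)
    (hrange : range Γ = {z | G z = 0}) :
    ∃ Γ' : ℝ → Plane, IsEssLinePlane Γ' ∧ range Γ' = {z | G z = 0} := by
  have hΓG (t : ℝ) : G (Γ t) = 0 := hrange.subset (mem_range_self t)
  have hsurj : Function.Surjective fun t => (Γ t).2 := fun y => by
    obtain ⟨x, hx⟩ := hG.exists_eq_zero y
    obtain ⟨t, ht⟩ := hrange.superset hx
    exact ⟨t, by simp only [ht]⟩
  obtain ⟨htop, hbot⟩ | ⟨htop, hbot⟩ := tendsto_ends_of_surjective_of_tendsto_abs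
    (continuous_snd.comp hΓ.continuous) hsurj (hG.tendsto_abs_snd hΓ hΓG)
  · exact ⟨Γ, ⟨hΓ.continuous, hΓ.injective, hΓ.isProperMap, htop, hbot⟩, hrange⟩
  · have hΓ' : IsClosedEmbedding (Γ ∘ Neg.neg) :=
      hΓ.comp (Homeomorph.neg ℝ).isClosedEmbedding
    exact ⟨Γ ∘ Neg.neg, ⟨hΓ'.continuous, hΓ'.injective, hΓ'.isProperMap,
      hbot.comp tendsto_neg_atTop_atBot, htop.comp tendsto_neg_atBot_atTop⟩,
      (neg_surjective.range_comp Γ).trans hrange⟩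

lemma SeparatesHorizontalEnds.not_isBounded_image {G : Plane → ℝ}
    (hG : SeparatesHorizontalEnds G) (R : Plane ≃ₜ Plane) :
    ¬ Bornology.IsBounded (R '' {z | G z = 0}) := fun hbdd => by
  have hsnd : BddAbove (Prod.snd '' {z | G z = 0}) := by
    have hK : IsCompact (R.symm '' closure (R '' {z | G z = 0})) :=
      hbdd.isCompact_closure.image R.symm.continuous
    refine (hK.image continuous_snd).bddAbove.mono (image_mono fun z hz => ?_)
    exact ⟨R z, subset_closure (mem_image_of_mem R hz), R.symm_apply_apply z⟩
  obtain ⟨M, hM⟩ := hsnd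
  obtain ⟨x, hx⟩ := hG.exists_eq_zero (M + 1)
  linarith [hM (mem_image_of_mem Prod.snd hx)]

lemma exists_mem_image_conj_apply_mem_image {l : Filter Plane} [l.NeBot] {g : Plane ≃ₜ Plane}
    (hg : Tendsto g l l) {E : Set Plane} (hE : E ∈ l) (R : Plane ≃ₜ Plane) :
    ∃ z ∈ R '' E, (R.symm.trans g).trans R z ∈ R '' E := by
  obtain ⟨z, hz, hgz⟩ := Filter.nonempty_of_mem (inter_mem hE (hg hE))
  exact ⟨R z, mem_image_of_mem R hz, by simpa using hgz⟩

lemma exists_separatesHorizontalEnds_isClosedEmbedding_of_mapsTo {ι : Type*}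
    {Ψ : ι → Plane ≃ₜ Plane} (hΨ : ∀ i, Commute (Ψ i) shift) {A B : Set Plane}
    (hA : IsClosed A) (hB : IsClosed B) (hAB : Disjoint A B) (hmaps : ∀ i, MapsTo (Ψ i) Bᶜ A)
    (hwest : A ∈ horizontalEnd atBot) (heast : B ∈ horizontalEnd atTop) :
    ∃ (G : Plane → ℝ) (Γ : ℝ → Plane), SeparatesHorizontalEnds G ∧ IsClosedEmbedding Γ ∧
      range Γ = {z | G z = 0} ∧ ∀ i z, G z ≤ 0 → G (Ψ i z) < 0 := by
  obtain ⟨E, hEA, hE, hEmem⟩ := exists_isPreconnected_mem_horizontalEnd_atBot hwest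
  obtain ⟨E', hEB, hE', hEmem'⟩ := exists_isPreconnected_mem_horizontalEnd_atTop heast
  have hne : E.Nonempty := Filter.nonempty_of_mem hEmem
  have hne' : E'.Nonempty := Filter.nonempty_of_mem hEmem'
  obtain ⟨R, hR⟩ := exists_homeomorph_lt_dist hA hB hAB (hne.mono hEA) (hne'.mono hEB) zero_le_two
  obtain ⟨S, hS, hSc, hneg, hpos, hdecr⟩ := exists_isGraphConnected_level_decreasing
    (Ψ := fun i => (R.symm.trans (Ψ i)).trans R) (A := R '' A) (B := R '' B) (E := R '' E)
    (E' := R '' E') (forall_mem_image.2 fun a ha => forall_mem_image.2 (hR a ha))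
    (fun i z hz => mem_image_of_mem R (hmaps i fun hz' => hz ⟨_, hz', R.apply_symm_apply z⟩))
    (hE.image R R.continuous.continuousOn) (hE'.image R R.continuous.continuousOn)
    (hne.image R) (hne'.image R) (image_mono hEA) (image_mono hEB)
    (fun i => exists_mem_image_conj_apply_mem_image
      (tendsto_horizontalEnd_atBot_of_commute (hΨ i)) hEmem R)
    (fun i => exists_mem_image_conj_apply_mem_image
      (tendsto_horizontalEnd_atTop_of_commute (hΨ i)) hEmem' R)
  have hG : SeparatesHorizontalEnds (level S ∘ R) :=
    ⟨(continuous_level S).comp R.continuous,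
      mem_of_superset hEmem fun z hz => hneg _ (mem_image_of_mem R hz),
      mem_of_superset hEmem' fun z hz => hpos _ (mem_image_of_mem R hz)⟩
  have hzeros : R '' {z | level S (R z) = 0} = {z | level S z = 0} :=
    R.surjective.image_preimage {z | level S z = 0}
  obtain ⟨Γ, hΓ, hrange⟩ := exists_isClosedEmbedding_range_eq_level_zero hS hSc
    (hzeros ▸ hG.not_isBounded_image R)
  refine ⟨level S ∘ R, R.symm ∘ Γ, hG, R.symm.isClosedEmbedding.comp hΓ, ?_, fun i z hz => ?_⟩
  · rw [range_comp, hrange, ← hzeros, R.symm.image_eq_preimage_symm, R.symm_symm]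
    exact R.injective.preimage_image _
  · simpa using hdecr i (R z) hz

lemma exists_trapped_isEssLinePlane_of_decreasing {ι : Type*} [Finite ι] [Nonempty ι]
    {Ψ : ι → Plane ≃ₜ Plane} (hΨ : ∀ i, Commute (Ψ i) shift) {u : Plane → ℝ}
    (hu : SeparatesHorizontalEnds u) (hdecr : ∀ i z, u (Ψ i z) < u z) :
    ∃ (G : Plane → ℝ) (Γ : ℝ → Plane), SeparatesHorizontalEnds G ∧ IsEssLinePlane Γ ∧
      range Γ = {z | G z = 0} ∧ ∀ i z, G z ≤ 0 → G (Ψ i z) < 0 := by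
  have hA : IsClosed {z | u z ≤ 0} := isClosed_le hu.continuous continuous_const
  have hB : IsClosed (⋃ i, {z | 0 ≤ u (Ψ i z)}) := isClosed_iUnion_of_finite fun i =>
    isClosed_le continuous_const (hu.continuous.comp (Ψ i).continuous)
  have hAB : Disjoint {z | u z ≤ 0} (⋃ i, {z | 0 ≤ u (Ψ i z)}) :=
    disjoint_iUnion_right.2 fun i => disjoint_left.2 fun z hz hz' =>
      ((hz'.trans_lt (hdecr i z)).trans_le hz).false
  have hmaps (i : ι) : MapsTo (Ψ i) (⋃ i, {z | 0 ≤ u (Ψ i z)})ᶜ {z | u z ≤ 0} := fun z hz =>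
    show u (Ψ i z) ≤ 0 from le_of_not_ge fun hle => hz (mem_iUnion.2 ⟨i, hle⟩)
  have heast : (⋃ i, {z | 0 ≤ u (Ψ i z)}) ∈ horizontalEnd atTop :=
    ((tendsto_horizontalEnd_atTop_of_commute (hΨ (Classical.arbitrary ι))).eventually
      hu.eventually_pos).mono fun z hz => mem_iUnion.2 ⟨_, hz.le⟩
  obtain ⟨G, Γ, hG, hΓ, hrange, htrap⟩ :=
    exists_separatesHorizontalEnds_isClosedEmbedding_of_mapsTo hΨ hA hB hAB hmaps
      (hu.eventually_neg.mono fun _ => le_of_lt) heast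
  obtain ⟨Γ', hΓ', hrange'⟩ := hG.exists_isEssLinePlane hΓ hrange
  exact ⟨G, Γ', hG, hΓ', hrange', htrap⟩

end TrappedLine

/-! ### Lyapunov functions of proper monoid actions -/

section Lyapunov

variable {M E : Type*}

/-- An action of an additive monoid by homeomorphisms which is proper: a compact set meets only
finitely many of its translates. -/
structure IsProperAction [AddCommMonoid M] [TopologicalSpace E] (P : M → E ≃ₜ E) : Prop where
  map_zero : P 0 = 1
  map_add : ∀ m n, P (m + n) = P m * P n
  finite_return : ∀ K : Set E, IsCompact K → {m | ∃ z ∈ K, P m z ∈ K}.Finite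

namespace IsProperAction

variable [AddCommMonoid M]

lemma apply_add [TopologicalSpace E] {P : M → E ≃ₜ E} (hP : IsProperAction P) (m n : M) (z : E) :
    P (m + n) z = P m (P n z) := by
  rw [hP.map_add, Homeomorph.mul_apply]

lemma inv [TopologicalSpace E] {P : M → E ≃ₜ E} (hP : IsProperAction P) :
    IsProperAction fun m => (P m)⁻¹ where
  map_zero := by rw [hP.map_zero, inv_one]
  map_add m n := by rw [add_comm, hP.map_add, mul_inv_rev]
  finite_return K hK := (hP.finite_return K hK).subset fun m ⟨z, hz, hPz⟩ =>
    ⟨(P m)⁻¹ z, hPz, by simpa using hz⟩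

end IsProperAction

/-- The sum of a function over the forward orbit of a point. It is used only when finitely many
terms are nonzero, since `∑ᶠ` takes the value `0` otherwise. -/
def orbitSum [TopologicalSpace E] (P : M → E ≃ₜ E) (f : E → ℝ) (z : E) : ℝ := ∑ᶠ m, f (P m z)

section OrbitSum

variable [TopologicalSpace E] {P : M → E ≃ₜ E} {f : E → ℝ}

lemma orbitSum_nonneg (hf : 0 ≤ f) (z : E) : 0 ≤ orbitSum P f z := finsum_nonneg fun _ => hf _

namespace IsProperAction

variable [AddCommMonoid M] (hP : IsProperAction P)
include hP

lemma finite_setOf_apply_ne_zero (hf : HasCompactSupport f) {K : Set E} (hK : IsCompact K) :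
    {m | ∃ z ∈ K, f (P m z) ≠ 0}.Finite :=
  (hP.finite_return (K ∪ tsupport f) (hK.union hf)).subset fun _ ⟨z, hz, hfz⟩ =>
    ⟨z, .inl hz, .inr (subset_tsupport f hfz)⟩

lemma finite_support_orbit (hf : HasCompactSupport f) (z : E) :
    (Function.support fun m => f (P m z)).Finite :=
  (hP.finite_setOf_apply_ne_zero hf isCompact_singleton).subset fun _ hm => ⟨z, rfl, hm⟩

lemma continuous_orbitSum [WeaklyLocallyCompactSpace E] (hf : Continuous f)
    (hsupp : HasCompactSupport f) : Continuous (orbitSum P f) := by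
  refine continuous_finsum (fun m => hf.comp (P m).continuous) fun z => ?_
  obtain ⟨K, hK, hKz⟩ := exists_compact_mem_nhds z
  exact ⟨K, hKz, (hP.finite_setOf_apply_ne_zero hsupp hK).subset fun _ ⟨w, hw, hwK⟩ =>
    ⟨w, hwK, hw⟩⟩

variable [PartialOrder M] [IsOrderedCancelAddMonoid M] [CanonicallyOrderedAdd M]

lemma orbitSum_apply_add_le (hf : 0 ≤ f) (hsupp : HasCompactSupport f) {m : M} (hm : m ≠ 0)
    (z : E) : orbitSum P f (P m z) + f z ≤ orbitSum P f z := by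
  classical
  let F := (hP.finite_support_orbit hsupp (P m z)).toFinset
  have hshift : orbitSum P f (P m z) = ∑ k ∈ F.map (addRightEmbedding m), f (P k z) := by
    rw [orbitSum, finsum_eq_sum _ (hP.finite_support_orbit hsupp (P m z)), Finset.sum_map]
    simp only [F, addRightEmbedding_apply, hP.apply_add]
  have hzero : (0 : M) ∉ F.map (addRightEmbedding m) := by simp [hm]
  have hfz : f z = f (P 0 z) := by rw [hP.map_zero, Homeomorph.one_apply]
  rw [hshift, hfz, add_comm, ← Finset.sum_insert (f := fun k => f (P k z)) hzero,
    orbitSum, ← tsum_eq_finsum (L := .unconditional M) (hP.finite_support_orbit hsupp z)]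
  exact (summable_of_hasFiniteSupport (hP.finite_support_orbit hsupp z)).sum_le_tsum _
    fun _ _ => hf _

lemma eventually_orbitSum_nsmul_eq_zero [LocallyFiniteOrderBot M] (hsupp : HasCompactSupport f)
    {m : M} (hm : m ≠ 0) (z : E) : ∀ᶠ n : ℕ in atTop, orbitSum P f (P (n • m) z) = 0 := by
  have hpos : 0 < m := pos_iff_ne_zero.2 hm
  have hfin : {n : ℕ | ∃ k, f (P (k + n • m) z) ≠ 0}.Finite := by
    refine (((hP.finite_support_orbit hsupp z).biUnion fun k _ => finite_Iic k).preimage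
      (nsmul_left_strictMono hpos).injective.injOn).subset fun n ⟨k, hk⟩ => ?_
    exact mem_biUnion (x := k + n • m) hk le_add_self
  filter_upwards [Nat.cofinite_eq_atTop ▸ hfin.compl_mem_cofinite] with n hn
  have hterm (k : M) : f (P k (P (n • m) z)) = 0 := by
    rw [← hP.apply_add]
    exact not_not.1 fun hne => hn ⟨k, hne⟩
  simp [orbitSum, hterm]

end IsProperAction

end OrbitSum

section Bump

variable [PseudoMetricSpace E]

/-- A continuous bump function supported in the closed ball of radius `i + 1` around `x₀`. -/
def bump (x₀ : E) (i : ℕ) (z : E) : ℝ := max 0 (i + 1 - dist z x₀)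

lemma continuous_bump (x₀ : E) (i : ℕ) : Continuous (bump x₀ i) := by
  unfold bump
  fun_prop

lemma bump_nonneg (x₀ : E) (i : ℕ) : 0 ≤ bump x₀ i := fun _ => le_max_left _ _

lemma hasCompactSupport_bump [ProperSpace E] (x₀ : E) (i : ℕ) : HasCompactSupport (bump x₀ i) :=
  HasCompactSupport.intro (isCompact_closedBall x₀ (i + 1)) fun z hz =>
    max_eq_left (by linarith [not_le.1 (Metric.mem_closedBall.not.1 hz)])

lemma exists_bump_pos (x₀ z : E) : ∃ i, 0 < bump x₀ i z := by
  obtain ⟨i, hi⟩ := exists_nat_gt (dist z x₀)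
  exact ⟨i, lt_max_of_lt_right (by linarith)⟩

end Bump

section WeightedSum

variable {s : ℕ → E → ℝ}

/-- A convergent series of weighted bounded reparametrizations of a sequence of functions. It is
continuous and strictly increasing in the family of nonnegative values `s i z`. -/
def weightedSum (s : ℕ → E → ℝ) (z : E) : ℝ := ∑' i, (1 / 2) ^ i * Real.arctan (s i z)

lemma weightedSum_nonneg (hs : ∀ i, 0 ≤ s i) : 0 ≤ weightedSum s := fun z =>
  tsum_nonneg fun i => mul_nonneg (by positivity) (Real.arctan_nonneg.2 (hs i z))

lemma norm_weightedSum_term_le (hs : ∀ i, 0 ≤ s i) (i : ℕ) (z : E) :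
    ‖(1 / 2) ^ i * Real.arctan (s i z)‖ ≤ (1 / 2) ^ i * (Real.pi / 2) := by
  rw [Real.norm_of_nonneg (mul_nonneg (by positivity) (Real.arctan_nonneg.2 (hs i z)))]
  exact mul_le_mul_of_nonneg_left (Real.arctan_lt_pi_div_two _).le (by positivity)

lemma summable_weightedSum_bound : Summable fun i : ℕ => (1 / 2 : ℝ) ^ i * (Real.pi / 2) :=
  summable_geometric_two.mul_right _

lemma continuous_weightedSum [TopologicalSpace E] (hs : ∀ i, 0 ≤ s i)
    (hcont : ∀ i, Continuous (s i)) : Continuous (weightedSum s) :=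
  continuous_tsum (fun i => continuous_const.mul (Real.continuous_arctan.comp (hcont i)))
    summable_weightedSum_bound (norm_weightedSum_term_le hs)

lemma weightedSum_lt_weightedSum (hs : ∀ i, 0 ≤ s i) {z w : E} (hle : ∀ i, s i w ≤ s i z) {j : ℕ}
    (hlt : s j w < s j z) : weightedSum s w < weightedSum s z := by
  have hsummable (z : E) : Summable fun i => (1 / 2) ^ i * Real.arctan (s i z) :=
    summable_weightedSum_bound.of_norm_bounded fun i => norm_weightedSum_term_le hs i z
  refine Summable.tsum_lt_tsum (i := j) (fun i => ?_) ?_ (hsummable w) (hsummable z)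
  · exact mul_le_mul_of_nonneg_left (Real.arctan_strictMono.monotone (hle i)) (by positivity)
  · exact mul_lt_mul_of_pos_left (Real.arctan_strictMono hlt) (by positivity)

lemma tendsto_weightedSum_zero (hs : ∀ i, 0 ≤ s i) {w : ℕ → E}
    (hw : ∀ i, ∀ᶠ n in atTop, s i (w n) = 0) :
    Tendsto (fun n => weightedSum s (w n)) atTop (𝓝 0) := by
  rw [← tsum_zero (α := ℝ) (β := ℕ)]
  refine tendsto_tsum_of_dominated_convergence summable_weightedSum_bound (fun i => ?_)
    (.of_forall fun n i => norm_weightedSum_term_le hs i (w n))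
  exact tendsto_const_nhds.congr' ((hw i).mono fun n hn => by simp [hn])

end WeightedSum

namespace IsProperAction

variable [AddCommMonoid M] [PartialOrder M] [IsOrderedCancelAddMonoid M]
  [CanonicallyOrderedAdd M] [LocallyFiniteOrderBot M]

section Monotone

variable [PseudoMetricSpace E] [ProperSpace E] [Nonempty E] {P : M → E ≃ₜ E}
  (hP : IsProperAction P)
include hP

lemma exists_decreasing :
    ∃ U : E → ℝ, Continuous U ∧ 0 ≤ U ∧ (∀ m ≠ 0, ∀ z, U (P m z) < U z) ∧
      ∀ m ≠ 0, ∀ z, Tendsto (fun n : ℕ => U (P (n • m) z)) atTop (𝓝 0) := by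
  let x₀ : E := Classical.arbitrary E
  let s (i : ℕ) : E → ℝ := orbitSum P (bump x₀ i)
  have hs (i : ℕ) : Continuous (s i) :=
    hP.continuous_orbitSum (continuous_bump x₀ i) (hasCompactSupport_bump x₀ i)
  have hs_nonneg (i : ℕ) : 0 ≤ s i := orbitSum_nonneg (bump_nonneg x₀ i)
  have hs_add (i : ℕ) {m : M} (hm : m ≠ 0) (z : E) : s i (P m z) + bump x₀ i z ≤ s i z :=
    hP.orbitSum_apply_add_le (bump_nonneg x₀ i) (hasCompactSupport_bump x₀ i) hm z
  refine ⟨weightedSum s, continuous_weightedSum hs_nonneg hs, weightedSum_nonneg hs_nonneg,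
    fun m hm z => ?_, fun m hm z => ?_⟩
  · obtain ⟨j, hj⟩ := exists_bump_pos x₀ z
    exact weightedSum_lt_weightedSum hs_nonneg
      (fun i => (le_add_of_nonneg_right (bump_nonneg x₀ i z)).trans (hs_add i hm z)) (j := j)
      ((lt_add_of_pos_right _ hj).trans_le (hs_add j hm z))
  · exact tendsto_weightedSum_zero hs_nonneg fun i =>
      hP.eventually_orbitSum_nsmul_eq_zero (hasCompactSupport_bump x₀ i) hm z

/-- The difference of a function decreasing along the action and one decreasing along the inverse
action is increasing, and it changes sign along each orbit. -/
lemma exists_increasing :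
    ∃ u : E → ℝ, Continuous u ∧ (∀ m ≠ 0, ∀ z, u z < u (P m z)) ∧
      ∀ m ≠ 0, ∀ z, (∃ n : ℕ, 0 < u (P (n • m) z)) ∧ ∃ n : ℕ, u ((P (n • m))⁻¹ z) < 0 := by
  obtain ⟨U, hU, hU_nonneg, hU_lt, hU_lim⟩ := hP.exists_decreasing
  obtain ⟨V, hV, hV_nonneg, hV_lt, hV_lim⟩ := hP.inv.exists_decreasing
  have hV_lt' (m : M) (hm : m ≠ 0) (z : E) : V z < V (P m z) := by
    simpa using hV_lt m hm (P m z)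
  have hU_lt' (m : M) (hm : m ≠ 0) (z : E) : U z < U ((P m)⁻¹ z) := by
    simpa using hU_lt m hm ((P m)⁻¹ z)
  have hV_le (m : M) (z : E) : V z ≤ V (P m z) := by
    obtain rfl | hm := eq_or_ne m 0
    · simp [hP.map_zero]
    · exact (hV_lt' m hm z).le
  have hU_le (m : M) (z : E) : U z ≤ U ((P m)⁻¹ z) := by
    obtain rfl | hm := eq_or_ne m 0
    · simp [hP.map_zero]
    · exact (hU_lt' m hm z).le
  refine ⟨fun z => V z - U z, hV.sub hU, fun m hm z => ?_, fun m hm z => ⟨?_, ?_⟩⟩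
  · linarith [hV_lt' m hm z, hU_lt m hm z]
  · have hV_pos : 0 < V z := (hV_nonneg _).trans_lt (hV_lt m hm z)
    obtain ⟨n, hn⟩ := ((hU_lim m hm z).eventually_lt_const hV_pos).exists
    exact ⟨n, by linarith [hV_le (n • m) z]⟩
  · have hU_pos : 0 < U z := (hU_nonneg _).trans_lt (hU_lt m hm z)
    obtain ⟨n, hn⟩ := ((hV_lim m hm z).eventually_lt_const hU_pos).exists
    exact ⟨n, by linarith [hU_le (n • m) z]⟩

end Monotone

section Plane

variable {P : M → Plane ≃ₜ Plane} (hP : IsProperAction P)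
include hP

lemma exists_separatesHorizontalEnds {m₀ : M} (hm₀ : m₀ ≠ 0) (hshift : P m₀ = shift) :
    ∃ u : Plane → ℝ, SeparatesHorizontalEnds u ∧ ∀ m ≠ 0, ∀ z, u z < u (P m z) := by
  obtain ⟨u, hu, hu_lt, hu_sign⟩ := hP.exists_increasing
  have hnsmul (n : ℕ) : P (n • m₀) = shift ^ (n : ℤ) := by
    induction n with
    | zero => simp [hP.map_zero]
    | succ n ih => rw [succ_nsmul, hP.map_add, ih, hshift, Nat.cast_succ, zpow_add_one]
  have hmono (z : Plane) : u z ≤ u (Tr 1 z) := by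
    simpa [hshift, ← shift_zpow_apply] using (hu_lt m₀ hm₀ z).le
  refine ⟨u, ⟨hu, eventually_neg_horizontalEnd_atBot hu hmono fun z => ?_,
    eventually_pos_horizontalEnd_atTop hu hmono fun z => ?_⟩, hu_lt⟩
  · simpa only [hnsmul, ← zpow_neg, shift_zpow_apply] using (hu_sign m₀ hm₀ z).2
  · simpa only [hnsmul, shift_zpow_apply] using (hu_sign m₀ hm₀ z).1

theorem exists_trapped_isEssLinePlane [AddMonoid.FG M] {m₀ : M} (hm₀ : m₀ ≠ 0)
    (hshift : P m₀ = shift) :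
    ∃ (G : Plane → ℝ) (Γ : ℝ → Plane), SeparatesHorizontalEnds G ∧ IsEssLinePlane Γ ∧
      range Γ = {z | G z = 0} ∧ ∀ m ≠ 0, ∀ z, G z ≤ 0 → G ((P m)⁻¹ z) < 0 := by
  obtain ⟨u, hu, hu_lt⟩ := hP.exists_separatesHorizontalEnds hm₀ hshift
  obtain ⟨S, hS, hSfin⟩ := AddMonoid.fg_iff.1 ‹AddMonoid.FG M›
  let ι := ↥(insert m₀ S \ {0})
  have : Finite ι := (hSfin.insert m₀).sdiff
  have : Nonempty ι := ⟨m₀, mem_insert m₀ S, hm₀⟩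
  have hcomm (s : ι) : Commute (P s)⁻¹ shift := Commute.inv_left <| by
    rw [← hshift, Commute, SemiconjBy, ← hP.map_add, ← hP.map_add, add_comm]
  obtain ⟨G, Γ, hG, hΓ, hrange, htrap⟩ :=
    exists_trapped_isEssLinePlane_of_decreasing hcomm hu
    fun s z => by simpa using hu_lt s s.2.2 ((P s)⁻¹ z)
  suffices h : ∀ m, m = 0 ∨ ∀ z, G z ≤ 0 → G ((P m)⁻¹ z) < 0 from
    ⟨G, Γ, hG, hΓ, hrange, fun m hm => (h m).resolve_left hm⟩
  intro m
  induction (hS ▸ AddSubmonoid.mem_top m : m ∈ AddSubmonoid.closure S)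
    using AddSubmonoid.closure_induction with
  | mem s hs => exact or_iff_not_imp_left.2 fun hs0 => htrap ⟨s, .inr hs, hs0⟩
  | zero => exact .inl rfl
  | add m n _ _ ihm ihn =>
    obtain rfl | ihm := ihm
    · rwa [zero_add]
    obtain rfl | ihn := ihn
    · exact .inr (by rwa [add_zero])
    · exact .inr fun z hz => by simpa [hP.map_add] using ihn _ (ihm z hz).le

end Plane

end IsProperAction

end Lyapunov

/-! ### The weak rotation set -/

section Rotation

variable {F : Plane ≃ₜ Plane} {p p' : ℤ} {q q' : ℕ} {K L : Set Plane}

lemma continuous_prj : Continuous prj :=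
  ((AddCircle.continuous_mk' 1).comp continuous_fst).prodMk continuous_snd

lemma exists_sub_eq_intCast_of_addCircle_coe_eq {x y : ℝ}
    (h : (x : AddCircle (1 : ℝ)) = (y : AddCircle (1 : ℝ))) : ∃ n : ℤ, x - y = n := by
  obtain ⟨n, hn⟩ := (AddCircle.coe_eq_zero_iff (1 : ℝ)).1
    (show ((x - y : ℝ) : AddCircle (1 : ℝ)) = 0 by rw [AddCircle.coe_sub, h, sub_self])
  exact ⟨n, by simpa using hn.symm⟩

lemma prj_Tr (k : ℤ) (z : Plane) : prj (Tr k z) = prj z := by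
  have hk : ((k : ℝ) : AddCircle (1 : ℝ)) = 0 := (AddCircle.coe_eq_zero_iff _).2 ⟨k, by simp⟩
  rw [prj, Tr, AddCircle.coe_add, hk, add_zero, prj]

lemma exists_eq_Tr_of_prj_eq {z w : Plane} (h : prj z = prj w) : ∃ k : ℤ, z = Tr k w := by
  obtain ⟨hx, hy⟩ := Prod.mk.inj h
  obtain ⟨k, hk⟩ := exists_sub_eq_intCast_of_addCircle_coe_eq hx
  exact ⟨k, Prod.ext (eq_add_of_sub_eq' hk) hy⟩

lemma finite_setOf_exists_Tr_mem (hK : IsCompact K) (hL : IsCompact L) :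
    {m : ℤ | ∃ z ∈ K, Tr m z ∈ L}.Finite := by
  have hD : IsCompact ((fun x : Plane × Plane => x.2.1 - x.1.1) '' K ×ˢ L) :=
    (hK.prod hL).image (by fun_prop)
  refine (isCompact_iff_finite.1 (Int.isClosedEmbedding_coe_real.isCompact_preimage hD)).subset ?_
  rintro m ⟨z, hz, hm⟩
  exact ⟨(z, Tr m z), ⟨hz, hm⟩, add_sub_cancel_left _ _⟩

lemma mem_rotWeak_of_tendsto (hK : IsCompact K) {zs : ℕ → Plane} {ns : ℕ → ℕ} {ms : ℕ → ℤ}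
    {r : EReal} (hz : ∀ k, zs k ∈ K) (hm : ∀ k, Tr (-ms k) (F^[ns k] (zs k)) ∈ K)
    (hpos : ∀ k, 0 < ns k) (hns : Tendsto ns atTop atTop)
    (hr : Tendsto (fun k => ((ms k / ns k : ℝ) : EReal)) atTop (𝓝 r)) : r ∈ RotWeak F := by
  obtain ⟨C, hC⟩ := hK.isBounded.exists_norm_le
  have hfst {z : Plane} (h : z ∈ K) : |z.1| ≤ C := (norm_fst_le z).trans (hC z h)
  have herr : Tendsto
      (fun k => ((F^[ns k] (zs k)).1 - (zs k).1 - ms k) / (ns k : ℝ)) atTop (𝓝 0) := by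
    refine squeeze_zero_norm (fun k => ?_)
      ((tendsto_const_div_atTop_nhds_zero_nat (C + C)).comp hns)
    rw [norm_div, RCLike.norm_natCast]
    refine div_le_div_of_nonneg_right ?_ (Nat.cast_nonneg _)
    have h₁ := abs_le.1 (hfst (hz k))
    have h₂ : |(F^[ns k] (zs k)).1 + ((-ms k : ℤ) : ℝ)| ≤ C := hfst (hm k)
    push_cast at h₂
    rw [abs_le] at h₂
    exact abs_le.2 ⟨by linarith, by linarith⟩
  refine mem_biUnion (hK.image continuous_prj)
    ⟨zs, ns, fun k => ⟨_, hz k, rfl⟩, fun k => ⟨_, hm k, prj_Tr _ _⟩, hpos, hns, ?_⟩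
  have hadd := (EReal.continuousAt_add (p := (r, ((0 : ℝ) : EReal))) (.inr (EReal.coe_ne_bot 0))
    (.inr (EReal.coe_ne_top 0))).tendsto.comp
      (hr.prodMk_nhds ((continuous_coe_real_ereal.tendsto 0).comp herr))
  simp only [EReal.coe_zero, add_zero] at hadd
  refine hadd.congr fun k => ?_
  simp only [Function.comp_apply, ← EReal.coe_add, ← add_div, add_sub_cancel]

lemma eventually_div_mem_of_rotWeak_subset {U : Set EReal} (hU : IsOpen U) (hsub : RotWeak F ⊆ U)
    (hK : IsCompact K) : ∀ᶠ n : ℕ in atTop, ∀ z ∈ K, ∀ m : ℤ, Tr (-m) (F^[n] z) ∈ K →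
      ((m / n : ℝ) : EReal) ∈ U := by
  by_contra hcon
  obtain ⟨ns, hns, h⟩ := extraction_of_frequently_atTop
    ((not_eventually.1 hcon).and_eventually (eventually_gt_atTop 0))
  have hpos (k : ℕ) : 0 < ns k := (h k).2
  replace h := fun k => (h k).1
  push Not at h
  choose zs hz ms hm hmem using h
  obtain ⟨r, -, φ, hφ, hr⟩ := isCompact_univ.tendsto_subseq (X := EReal)
    (x := fun k => ((ms k / ns k : ℝ) : EReal)) fun _ => mem_univ _
  have hrU : r ∈ U := hsub <| mem_rotWeak_of_tendsto hK (fun k => hz (φ k)) (fun k => hm (φ k))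
    (fun k => hpos (φ k)) (hns.tendsto_atTop.comp hφ.tendsto_atTop) hr
  obtain ⟨k, hk⟩ := (hr.eventually_mem (hU.mem_nhds hrU)).exists
  exact hmem (φ k) hk

lemma finite_setOf_return_of_abs_le (hK : IsCompact K) (N : ℤ) :
    {a : ℤ × ℤ | |a.1| ≤ N ∧ ∃ z ∈ K, (F ^ a.1 * shift ^ a.2) z ∈ K}.Finite := by
  refine ((finite_Icc (-N) N).biUnion fun n _ => (finite_singleton n).prod
    (finite_setOf_exists_Tr_mem hK (hK.image (F ^ n)⁻¹.continuous))).subset ?_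
  rintro ⟨n, m⟩ ⟨hn, z, hz, hzK⟩
  refine mem_biUnion (abs_le.1 hn) ⟨rfl, z, hz, _, hzK, ?_⟩
  simp [shift_zpow_apply]

lemma iterate_eq_pow (n : ℕ) : F^[n] = ⇑(F ^ n) :=
  (hom_coe_pow (fun g : Plane ≃ₜ Plane => ⇑g) rfl (fun _ _ => rfl) F n).symm

lemma zpow_add_mul_shift_zpow_add (hF : Commute F shift) (n n' m m' : ℤ) :
    F ^ (n + n') * shift ^ (m + m') = F ^ n * shift ^ m * (F ^ n' * shift ^ m') := by
  rw [(hF.zpow_zpow _ _).symm.mul_mul_mul_comm, ← zpow_add, ← zpow_add]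

/-- The maps `F ^ q T ^ (-p)` and `F ^ (-q') T ^ p'` attached to the two ends of a Farey interval,
and their composites, indexed by `ℕ × ℕ`. -/
def fareyAction (F : Plane ≃ₜ Plane) (p p' : ℤ) (q q' : ℕ) (k : ℕ × ℕ) : Plane ≃ₜ Plane :=
  F ^ (q * k.1 - q' * k.2 : ℤ) * shift ^ (p' * k.2 - p * k.1)

lemma fareyAction_swap_eq_shift (hFarey : (q : ℤ) * p' - p * q' = 1) :
    fareyAction F p p' q q' (q', q) = shift := by
  rw [fareyAction, show (q * q' - q' * q : ℤ) = 0 by ring,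
    show p' * q - p * q' = 1 by linarith, zpow_zero, one_mul, zpow_one]

lemma fareyAction_add (hF : Commute F shift) (k l : ℕ × ℕ) :
    fareyAction F p p' q q' (k + l) = fareyAction F p p' q q' k * fareyAction F p p' q q' l := by
  rw [fareyAction, fareyAction, fareyAction, ← zpow_add_mul_shift_zpow_add hF]
  congr 2 <;> push_cast [Prod.fst_add, Prod.snd_add] <;> ring

lemma injective_fareyAction_exponents (hFarey : (q : ℤ) * p' - p * q' = 1) :
    Function.Injective fun k : ℕ × ℕ => ((q * k.1 - q' * k.2, p' * k.2 - p * k.1) : ℤ × ℤ) := by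
  rintro ⟨a, b⟩ ⟨c, d⟩ h
  obtain ⟨h₁, h₂⟩ := Prod.mk.inj h
  have hac : (a : ℤ) = c := by linear_combination p' * h₁ + q' * h₂ + (c - a : ℤ) * hFarey
  have hbd : (b : ℤ) = d := by linear_combination p * h₁ + q * h₂ + (d - b : ℤ) * hFarey
  exact Prod.ext (mod_cast hac) (mod_cast hbd)

lemma div_le_of_fareyAction_exponent_pos (hq : 0 < q) (hFarey : (q : ℤ) * p' - p * q' = 1)
    {a b n : ℕ} (hn₀ : 0 < n) (hn : (q * a - q' * b : ℤ) = n) :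
    ((-(p' * b - p * a) : ℤ) / n : ℝ) ≤ p / q := by
  rw [div_le_div_iff₀ (by positivity) (by positivity)]
  suffices (-(p' * b - p * a)) * (q : ℤ) ≤ p * n from mod_cast this
  rw [← hn]
  linear_combination -(b : ℤ) * hFarey + (Nat.cast_nonneg b : (0 : ℤ) ≤ b)

lemma div_le_of_fareyAction_exponent_neg (hq' : 0 < q') (hFarey : (q : ℤ) * p' - p * q' = 1)
    {a b n : ℕ} (hn₀ : 0 < n) (hn : (q * a - q' * b : ℤ) = -n) :
    (p' / q' : ℝ) ≤ (p' * b - p * a : ℤ) / n := by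
  rw [div_le_div_iff₀ (by positivity) (by positivity)]
  suffices p' * (n : ℤ) ≤ (p' * b - p * a) * q' from mod_cast this
  rw [← neg_eq_iff_eq_neg.2 hn]
  linear_combination -(a : ℤ) * hFarey + (Nat.cast_nonneg a : (0 : ℤ) ≤ a)

lemma exists_abs_fareyAction_exponent_le (hF : Commute F shift) (hq : 0 < q) (hq' : 0 < q')
    (hFarey : (q : ℤ) * p' - p * q' = 1)
    (hsub : RotWeak F ⊆ Ioo ((p / q : ℝ) : EReal) ((p' / q' : ℝ) : EReal)) (hK : IsCompact K) :
    ∃ N : ℤ, ∀ k : ℕ × ℕ, (∃ z ∈ K, fareyAction F p p' q q' k z ∈ K) →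
      |(q * k.1 - q' * k.2 : ℤ)| ≤ N := by
  obtain ⟨N, hN⟩ := (eventually_div_mem_of_rotWeak_subset isOpen_Ioo hsub hK).exists_forall_of_atTop
  refine ⟨N, fun ⟨a, b⟩ ⟨z, hz, hzK⟩ => ?_⟩
  by_contra! hlt
  obtain hpos | hneg := lt_abs.1 hlt
  · obtain ⟨n, hn⟩ := Int.eq_ofNat_of_zero_le (show (0 : ℤ) ≤ q * a - q' * b by lia)
    refine (hN n (by lia) z hz (-(p' * b - p * a)) ?_).1.not_ge
      (EReal.coe_le_coe_iff.2 (div_le_of_fareyAction_exponent_pos hq hFarey (by lia) hn))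
    rw [fareyAction, (hF.zpow_zpow _ _).eq, hn] at hzK
    simpa [iterate_eq_pow, ← shift_zpow_apply] using hzK
  · obtain ⟨n, hn⟩ := Int.eq_ofNat_of_zero_le (show (0 : ℤ) ≤ -(q * a - q' * b) by lia)
    refine (hN n (by lia) _ hzK (p' * b - p * a) ?_).2.not_ge (EReal.coe_le_coe_iff.2
      (div_le_of_fareyAction_exponent_neg hq' hFarey (by lia) (neg_eq_iff_eq_neg.1 hn)))
    rw [fareyAction, neg_eq_iff_eq_neg.1 hn, ← shift_zpow_apply, zpow_neg]
    simpa [iterate_eq_pow] using hz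

theorem isProperAction_fareyAction (hF : Commute F shift) (hq : 0 < q) (hq' : 0 < q')
    (hFarey : (q : ℤ) * p' - p * q' = 1)
    (hsub : RotWeak F ⊆ Ioo ((p / q : ℝ) : EReal) ((p' / q' : ℝ) : EReal)) :
    IsProperAction (fareyAction F p p' q q') where
  map_zero := by simp [fareyAction]
  map_add := fareyAction_add hF
  finite_return K hK := by
    obtain ⟨N, hN⟩ := exists_abs_fareyAction_exponent_le hF hq hq' hFarey hsub hK
    exact ((finite_setOf_return_of_abs_le (F := F) hK N).preimage
      (injective_fareyAction_exponents hFarey).injOn).subset fun k hk => ⟨hN k hk, hk⟩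

end Rotation

/-! ### Farey arithmetic -/

section Farey

variable {p p' : ℤ} {q q' : ℕ}

lemma exists_fareyAction_exponents_eq_or_eq_neg (hFarey : (q : ℤ) * p' - p * q' = 1) {n : ℤ}
    (hn : |n| < q + q') (m : ℤ) :
    ∃ a b : ℕ, ((q * a - q' * b : ℤ) = n ∧ (p' * b - p * a : ℤ) = m) ∨
      ((q * a - q' * b : ℤ) = -n ∧ (p' * b - p * a : ℤ) = -m) := by
  obtain ⟨a, ha⟩ : ∃ a, a = p' * n + q' * m := ⟨_, rfl⟩
  obtain ⟨b, hb⟩ : ∃ b, b = p * n + q * m := ⟨_, rfl⟩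
  have hn_eq : q * a - q' * b = n := by rw [ha, hb]; linear_combination n * hFarey
  have hm_eq : p' * b - p * a = m := by rw [ha, hb]; linear_combination m * hFarey
  obtain ⟨hn₁, hn₂⟩ := abs_lt.1 hn
  have hsign : (0 ≤ a ∧ 0 ≤ b) ∨ (0 ≤ -a ∧ 0 ≤ -b) := by
    by_contra! ⟨hpos, hneg⟩
    obtain ⟨ha₀, hb₀⟩ | ⟨ha₀, hb₀⟩ : (a ≤ -1 ∧ 1 ≤ b) ∨ (1 ≤ a ∧ b ≤ -1) := by lia
    · nlinarith
    · nlinarith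
  obtain ⟨ha₀, hb₀⟩ | ⟨ha₀, hb₀⟩ := hsign
  · lift a to ℕ using ha₀
    lift b to ℕ using hb₀
    exact ⟨a, b, .inl ⟨hn_eq, hm_eq⟩⟩
  · refine ⟨(-a).toNat, (-b).toNat, .inr ?_⟩
    rw [Int.toNat_of_nonneg ha₀, Int.toNat_of_nonneg hb₀]
    exact ⟨by linarith, by linarith⟩

lemma fareyAction_exponents_mul_add_pos (hq : 0 < q) (hq' : 0 < q') {ρ : ℝ}
    (hρ : ρ ∈ Ioo (p / q : ℝ) (p' / q')) {a b : ℕ} (hab : (a, b) ≠ 0) :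
    0 < ((q * a - q' * b : ℤ) : ℝ) * ρ + (p' * b - p * a : ℤ) := by
  have hp : 0 < q * ρ - p := sub_pos.2 ((div_lt_iff₀' (by positivity)).1 hρ.1)
  have hp' : 0 < p' - q' * ρ := sub_pos.2 ((lt_div_iff₀' (by positivity)).1 hρ.2)
  have hsum : ((q * a - q' * b : ℤ) : ℝ) * ρ + (p' * b - p * a : ℤ) =
      a * (q * ρ - p) + b * (p' - q' * ρ) := by
    push_cast
    ring
  rw [hsum]
  obtain ha | hb : 0 < a ∨ 0 < b := by
    simp only [ne_eq, Prod.mk_eq_zero] at hab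
    lia
  · positivity
  · positivity

end Farey

/-! ### The order on lines -/

section LineOrder

variable {C D : Set Plane} {g : Plane ≃ₜ Plane} {G : Plane → ℝ}

lemma eventually_connectedComponentIn_eq_Lset (hC : Cᶜ ∈ horizontalEnd atBot) :
    ∀ᶠ z in horizontalEnd atBot, connectedComponentIn Cᶜ z = Lset C := by
  obtain ⟨E, hEC, hE, hE_mem⟩ := exists_isPreconnected_mem_horizontalEnd_atBot hC
  have heq {z w : Plane} (hz : z ∈ E) (hw : w ∈ E) :
      connectedComponentIn Cᶜ z = connectedComponentIn Cᶜ w :=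
    connectedComponentIn_eq (hE.subset_connectedComponentIn hz hEC hw)
  obtain ⟨s, hs⟩ := eventually_atBot.1 ((tendsto_mk_horizontalEnd atBot 0).eventually hE_mem)
  filter_upwards [hE_mem] with z hz
  refine Subset.antisymm (fun w hw => ⟨s, fun x hx => heq hz (hs x hx) ▸ hw⟩) ?_
  rintro w ⟨t, ht⟩
  exact heq (hs _ (min_le_left s t)) hz ▸ ht _ (min_le_right s t)

lemma compl_image_mem_horizontalEnd (hg : Commute g shift) (hC : Cᶜ ∈ horizontalEnd atBot) :
    (g '' C)ᶜ ∈ horizontalEnd atBot := by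
  rw [← image_compl_eq g.bijective, ← Homeomorph.preimage_symm]
  exact tendsto_horizontalEnd_atBot_of_commute hg.inv_left hC

lemma Lset_image (hg : Commute g shift) (hC : Cᶜ ∈ horizontalEnd atBot) :
    Lset (g '' C) = g '' Lset C := by
  obtain ⟨z, hz, hLz, hLgz⟩ := ((eventually_mem_set.2 hC).and
    ((eventually_connectedComponentIn_eq_Lset hC).and
      ((tendsto_horizontalEnd_atBot_of_commute hg).eventually
        (eventually_connectedComponentIn_eq_Lset (compl_image_mem_horizontalEnd hg hC))))).exists
  rw [← hLz, ← hLgz, g.image_connectedComponentIn hz, image_compl_eq g.bijective]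

lemma lineLT_image_image_iff (hg : Commute g shift) (hC : Cᶜ ∈ horizontalEnd atBot)
    (hD : Dᶜ ∈ horizontalEnd atBot) : lineLT (g '' C) (g '' D) ↔ lineLT C D := by
  rw [lineLT, Lset_image hg hC, Lset_image hg hD, ← g.image_closure,
    image_subset_image_iff g.injective, lineLT]

lemma lineLT.trans {E : Set Plane} (hCD : lineLT C D) (hDE : lineLT D E) : lineLT C E :=
  (Subset.trans hCD subset_closure).trans hDE

lemma not_lineLT_self (hC : IsClosed C) (hC_nonempty : C.Nonempty)
    (hC_end : Cᶜ ∈ horizontalEnd atBot) : ¬ lineLT C C := by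
  intro h
  obtain ⟨z, hz, hL⟩ := ((eventually_mem_set.2 hC_end).and
    (eventually_connectedComponentIn_eq_Lset hC_end)).exists
  have hopen : IsOpen (Lset C) := hL ▸ hC.isOpen_compl.connectedComponentIn
  have huniv : Lset C = univ := IsClopen.eq_univ ⟨isClosed_of_closure_subset h, hopen⟩
    ⟨z, hL ▸ mem_connectedComponentIn hz⟩
  obtain ⟨w, hw⟩ := hC_nonempty
  exact connectedComponentIn_subset Cᶜ z (hL ▸ huniv ▸ mem_univ w) hw

lemma disjoint_zeroSet_image (htrap : ∀ z, G z ≤ 0 → G (g⁻¹ z) < 0) :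
    Disjoint {z | G z = 0} (g '' {z | G z = 0}) := by
  rw [disjoint_left]
  rintro _ hgz ⟨z, hz, rfl⟩
  exact (htrap (g z) (le_of_eq hgz)).ne (by simpa using hz)

namespace SeparatesHorizontalEnds

variable (hG : SeparatesHorizontalEnds G)
include hG

lemma compl_zeroSet_mem_horizontalEnd : {z | G z = 0}ᶜ ∈ horizontalEnd atBot :=
  hG.eventually_neg.mono fun _ hz => hz.ne

lemma Lset_zeroSet_subset : Lset {z | G z = 0} ⊆ {z | G z < 0} := by
  obtain ⟨z, hz, hL⟩ := (hG.eventually_neg.and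
    (eventually_connectedComponentIn_eq_Lset hG.compl_zeroSet_mem_horizontalEnd)).exists
  rw [← hL]
  intro w hw
  by_contra hGw
  obtain ⟨v, hv, hGv⟩ := isPreconnected_connectedComponentIn.intermediate_value
    (mem_connectedComponentIn hz.ne) hw hG.continuous.continuousOn ⟨hz.le, not_lt.1 hGw⟩
  exact connectedComponentIn_subset _ _ hv hGv

lemma lineLT_image_zeroSet (hg : Commute g shift) (htrap : ∀ z, G z ≤ 0 → G (g⁻¹ z) < 0) :
    lineLT {z | G z = 0} (g '' {z | G z = 0}) := by
  have hC := hG.compl_zeroSet_mem_horizontalEnd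
  have hclosure : closure (Lset {z | G z = 0}) ⊆ {z | G z ≤ 0} :=
    closure_minimal (hG.Lset_zeroSet_subset.trans fun z hz => show G z ≤ 0 from le_of_lt hz)
      (isClosed_le hG.continuous continuous_const)
  have hcompl : ⇑g⁻¹ '' closure (Lset {z | G z = 0}) ⊆ {z | G z = 0}ᶜ :=
    image_subset_iff.2 fun z hz => (htrap z (hclosure hz)).ne
  obtain ⟨z, hz, hL, hLg⟩ := ((eventually_mem_set.2 hC).and
    ((eventually_connectedComponentIn_eq_Lset hC).and
      ((tendsto_horizontalEnd_atBot_of_commute hg.inv_left).eventually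
        (eventually_connectedComponentIn_eq_Lset hC)))).exists
  have hconn : IsPreconnected (closure (Lset {z | G z = 0})) :=
    hL ▸ isPreconnected_connectedComponentIn.closure
  have hsub := (hconn.image _ g⁻¹.continuous.continuousOn).subset_connectedComponentIn
    (mem_image_of_mem _ (subset_closure (hL ▸ mem_connectedComponentIn hz))) hcompl
  rw [lineLT, Lset_image hg hC]
  exact fun w hw => ⟨g⁻¹ w, hLg ▸ hsub (mem_image_of_mem _ hw), g.apply_symm_apply w⟩

lemma not_lineLT_zeroSet_self : ¬ lineLT {z | G z = 0} {z | G z = 0} :=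
  not_lineLT_self (isClosed_eq hG.continuous continuous_const)
    ((hG.exists_eq_zero 0).elim fun x hx => ⟨(x, 0), hx⟩) hG.compl_zeroSet_mem_horizontalEnd

end SeparatesHorizontalEnds

end LineOrder

/-! ### Iterates of a trapped line -/

section Iterates

variable {f : Ann ≃ₜ Ann} {F : Plane ≃ₜ Plane} {p p' : ℤ} {q q' : ℕ} {C : Set Plane}

lemma fareyAction_inv (hF : Commute F shift) (a b : ℕ) :
    (fareyAction F p p' q q' (a, b))⁻¹ =
      F ^ (-(q * a - q' * b) : ℤ) * shift ^ (-(p' * b - p * a)) := by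
  rw [fareyAction, mul_inv_rev, ← zpow_neg, ← zpow_neg, (hF.zpow_zpow _ _).eq]

lemma commute_fareyAction_shift (hF : Commute F shift) (k : ℕ × ℕ) :
    Commute (fareyAction F p p' q q' k) shift :=
  (hF.zpow_left _).mul_left (Commute.zpow_self shift _)

lemma disjoint_zpow_mul_shift_zpow_image (hF : Commute F shift)
    (hFarey : (q : ℤ) * p' - p * q' = 1)
    (hdisj : ∀ k ≠ 0, Disjoint C (fareyAction F p p' q q' k '' C)) {n m : ℤ}
    (hn : |n| < q + q') (hnm : n ≠ 0 ∨ m ≠ 0) : Disjoint C ((F ^ n * shift ^ m) '' C) := by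
  obtain ⟨a, b, ⟨rfl, rfl⟩ | ⟨hn', hm'⟩⟩ := exists_fareyAction_exponents_eq_or_eq_neg hFarey hn m
  · exact hdisj (a, b) (by rintro ⟨⟩; simp at hnm)
  · have hab : (a, b) ≠ 0 := by
      rintro ⟨⟩
      simp only [Nat.cast_zero, mul_zero, sub_zero] at hn' hm'
      lia
    rw [← neg_eq_iff_eq_neg.2 hn', ← neg_eq_iff_eq_neg.2 hm', ← fareyAction_inv hF,
      ← disjoint_image_iff (fareyAction F p p' q q' (a, b)).injective, image_image]
    simpa using (hdisj (a, b) hab).symm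

lemma lineLT_zpow_mul_shift_zpow_image_iff (hF : Commute F shift) (hq : 0 < q) (hq' : 0 < q')
    (hFarey : (q : ℤ) * p' - p * q' = 1) (hC : Cᶜ ∈ horizontalEnd atBot) (hirrefl : ¬ lineLT C C)
    (hlt : ∀ k ≠ 0, lineLT C (fareyAction F p p' q q' k '' C)) {ρ : ℝ}
    (hρ : ρ ∈ Ioo (p / q : ℝ) (p' / q')) {n : ℤ} (hn : |n| < q + q') (m : ℤ) :
    lineLT C ((F ^ n * shift ^ m) '' C) ↔ 0 < n * ρ + m := by
  obtain ⟨a, b, hab⟩ := exists_fareyAction_exponents_eq_or_eq_neg hFarey hn m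
  by_cases hzero : (a, b) = 0
  · obtain ⟨rfl, rfl⟩ := Prod.mk.inj hzero
    obtain ⟨rfl, rfl⟩ : n = 0 ∧ m = 0 := by simpa [eq_comm] using hab
    have himage : ⇑(F ^ (0 : ℤ) * shift ^ (0 : ℤ)) '' C = C := image_id C
    rw [himage]
    exact iff_of_false hirrefl (by simp)
  have hpos := fareyAction_exponents_mul_add_pos hq hq' hρ hzero
  obtain ⟨rfl, rfl⟩ | ⟨hn', hm'⟩ := hab
  · exact iff_of_true (hlt (a, b) hzero) hpos
  · rw [hn', hm'] at hpos
    refine iff_of_false (fun h => hirrefl ((hlt (a, b) hzero).trans ?_))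
      (by push_cast at hpos; linarith)
    have hcomm : Commute (fareyAction F p p' q q' (a, b)) shift := commute_fareyAction_shift hF _
    rw [← neg_eq_iff_eq_neg.2 hn', ← neg_eq_iff_eq_neg.2 hm', ← fareyAction_inv hF] at h
    rw [← lineLT_image_image_iff hcomm.inv_left (compl_image_mem_horizontalEnd hcomm hC) hC,
      image_image]
    simpa using h

lemma Tr_image_iterate_image (hF : Commute F shift) (i : ℕ) (k : ℤ) :
    Tr k '' (F^[i] '' C) = (F ^ (i : ℤ) * shift ^ k) '' C := by
  rw [(hF.zpow_zpow _ _).eq, image_image]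
  simp [iterate_eq_pow, shift_zpow_apply]

lemma disjoint_prj_image {A B : Set Plane} (h : ∀ k : ℤ, Disjoint A (Tr k '' B)) :
    Disjoint (prj '' A) (prj '' B) := by
  rw [disjoint_left]
  rintro _ ⟨z, hz, rfl⟩ ⟨w, hw, hwz⟩
  obtain ⟨k, rfl⟩ := exists_eq_Tr_of_prj_eq hwz.symm
  exact disjoint_left.1 (h k) hz (mem_image_of_mem _ hw)

lemma Tr_image_iterate_image_eq_image (hF : Commute F shift) (i j : ℕ) (k l : ℤ) :
    Tr l '' (F^[j] '' C) =
      (F ^ (i : ℤ) * shift ^ k) '' ((F ^ (j - i : ℤ) * shift ^ (l - k)) '' C) := by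
  have hmul := zpow_add_mul_shift_zpow_add hF i (j - i) k (l - k)
  rw [add_sub_cancel, add_sub_cancel] at hmul
  rw [Tr_image_iterate_image hF, hmul, image_image]
  rfl

lemma iterate_image_prj_image (hlift : IsLift f F) (i : ℕ) (A : Set Plane) :
    f^[i] '' (prj '' A) = prj '' (F^[i] '' A) := by
  rw [image_image, image_image]
  exact image_congr fun z _ =>
    ((Function.Semiconj.iterate_right (f := prj) (ga := F) (gb := f) hlift i) z).symm

theorem disjoint_iterate_image_prj_image (hlift : IsLift f F) (hF : Commute F shift)
    (hFarey : (q : ℤ) * p' - p * q' = 1)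
    (hdisj : ∀ k ≠ 0, Disjoint C (fareyAction F p p' q q' k '' C)) {i j : ℕ}
    (hi : i < q + q') (hj : j < q + q') (hij : i ≠ j) :
    Disjoint (f^[i] '' (prj '' C)) (f^[j] '' (prj '' C)) := by
  rw [iterate_image_prj_image hlift, iterate_image_prj_image hlift]
  refine disjoint_prj_image fun k => ?_
  have hsource := Tr_image_iterate_image (C := C) hF i 0
  rw [show Tr 0 = id by ext <;> simp [Tr], image_id] at hsource
  rw [Tr_image_iterate_image_eq_image hF i j 0, hsource,
    disjoint_image_iff (F ^ (i : ℤ) * shift ^ (0 : ℤ)).injective]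
  exact disjoint_zpow_mul_shift_zpow_image hF hFarey hdisj (by grind) (.inl (by lia))

theorem lineLT_Tr_image_iterate_image_iff (hF : Commute F shift) (hq : 0 < q) (hq' : 0 < q')
    (hFarey : (q : ℤ) * p' - p * q' = 1) (hC : Cᶜ ∈ horizontalEnd atBot) (hirrefl : ¬ lineLT C C)
    (hlt : ∀ k ≠ 0, lineLT C (fareyAction F p p' q q' k '' C)) {ρ : ℝ}
    (hρ : ρ ∈ Ioo (p / q : ℝ) (p' / q')) {i j : ℕ} (hi : i < q + q') (hj : j < q + q') (k : ℤ) :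
    lineLT (Tr k '' (F^[i] '' C)) (F^[j] '' C) ↔ i * ρ + k < j * ρ := by
  have hcomm (n m : ℤ) : Commute (F ^ n * shift ^ m) shift :=
    (hF.zpow_left n).mul_left (Commute.zpow_self shift m)
  have htarget := Tr_image_iterate_image_eq_image (C := C) hF i j k 0
  rw [show Tr 0 = id by ext <;> simp [Tr], image_id] at htarget
  rw [htarget, Tr_image_iterate_image hF, lineLT_image_image_iff (hcomm _ _) hC
    (compl_image_mem_horizontalEnd (hcomm _ _) hC), lineLT_zpow_mul_shift_zpow_image_iff hF hq hq'
    hFarey hC hirrefl hlt hρ (by grind)]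
  push_cast
  constructor <;> intro h <;> linarith

lemma isProperMap_of_tendsto_snd {X : Type*} [TopologicalSpace X] [T2Space X] {Γ : ℝ → X × ℝ}
    (hΓ : Continuous Γ) (htop : Tendsto (fun t => (Γ t).2) atTop atTop)
    (hbot : Tendsto (fun t => (Γ t).2) atBot atBot) : IsProperMap Γ := by
  refine isProperMap_of_comp_of_t2 hΓ continuous_snd (isProperMap_iff_tendsto_cocompact.2
    ⟨continuous_snd.comp hΓ, ?_⟩)
  rw [cocompact_eq_atBot_atTop]
  exact hbot.sup_sup htop

theorem isEssLineAnn_prj_comp {Γ : ℝ → Plane} (hΓ : IsEssLinePlane Γ)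
    (hdisj : ∀ k : ℤ, k ≠ 0 → Disjoint (range Γ) (Tr k '' range Γ)) : IsEssLineAnn (prj ∘ Γ) := by
  obtain ⟨hcont, hinj, -, htop, hbot⟩ := hΓ
  have hcont' := continuous_prj.comp hcont
  refine ⟨hcont', fun s t hst => ?_, isProperMap_of_tendsto_snd hcont' htop hbot,
    .inl ⟨htop, hbot⟩⟩
  obtain ⟨k, hk⟩ := exists_eq_Tr_of_prj_eq hst
  obtain rfl | hk₀ := eq_or_ne k 0
  · exact hinj (by simpa [Tr] using hk)
  · exact absurd (hk ▸ mem_image_of_mem _ (mem_range_self t))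
      (disjoint_left.1 (hdisj k hk₀) (mem_range_self s))

end Iterates

/-! ### Lifts of homeomorphisms isotopic to the identity -/

section Isotopy

variable {f : Ann ≃ₜ Ann} {F : Plane ≃ₜ Plane}

lemma sub_eq_sub_of_addCircle_coe_eq {X : Type*} [TopologicalSpace X] [PreconnectedSpace X]
    {u v : X → ℝ} (hu : Continuous u) (hv : Continuous v)
    (h : ∀ x, (u x : AddCircle (1 : ℝ)) = (v x : AddCircle (1 : ℝ))) (x y : X) :
    u x - v x = u y - v y := by
  choose m hm using fun x => exists_sub_eq_intCast_of_addCircle_coe_eq (h x)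
  have hcont : Continuous m :=
    Int.isClosedEmbedding_coe_real.isInducing.continuous_iff.2 ((hu.sub hv).congr hm)
  rw [hm, hm, PreconnectedSpace.constant ‹_› hcont]

lemma lift_increment_eq_of_homotopy (φ : C(ℝ × ℝ, AddCircle (1 : ℝ)))
    (hφ : ∀ t, φ (t, 1) = φ (t, 0)) {u v : ℝ → ℝ} (hu : Continuous u) (hv : Continuous v)
    (hφu : ∀ s, φ (0, s) = u s) (hφv : ∀ s, φ (1, s) = v s) : u 1 - u 0 = v 1 - v 0 := by
  obtain ⟨L, ⟨-, hL⟩, -⟩ := (AddCircle.isCoveringMap_coe (1 : ℝ)).existsUnique_continuousMap_lifts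
    φ (0, 0) (u 0) (hφu 0).symm
  replace hL (t s : ℝ) : (L (t, s) : AddCircle (1 : ℝ)) = φ (t, s) := congr_fun hL (t, s)
  have hconst := sub_eq_sub_of_addCircle_coe_eq (u := fun t => L (t, 1)) (v := fun t => L (t, 0))
    (by fun_prop) (by fun_prop) (fun t => by rw [hL, hL, hφ]) 0 1
  have hLu := sub_eq_sub_of_addCircle_coe_eq (u := fun s => L (0, s)) (by fun_prop) hu
    (fun s => by rw [hL, hφu]) 0 1
  have hLv := sub_eq_sub_of_addCircle_coe_eq (u := fun s => L (1, s)) (by fun_prop) hv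
    (fun s => by rw [hL, hφv]) 0 1
  linarith

lemma IsotopicToId.lift_one_sub_lift_zero (hiso : IsotopicToId f) (hlift : IsLift f F) :
    (F (1, 0)).1 - (F (0, 0)).1 = 1 := by
  obtain ⟨H, hH, -, hH₀, hH₁⟩ := hiso
  have hprj (s : ℝ) : (prj (s, 0)).1 = s := rfl
  let φ : C(ℝ × ℝ, AddCircle (1 : ℝ)) := ⟨fun x => (H x.1 (prj (x.2, 0))).1, continuous_fst.comp
    (hH.comp (continuous_fst.prodMk (continuous_prj.comp (by fun_prop))))⟩
  have hφ (t : ℝ) : φ (t, 1) = φ (t, 0) := by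
    have h : prj (1, 0) = prj (0, 0) := by simpa [Tr] using prj_Tr 1 (0, 0)
    simp only [φ, ContinuousMap.coe_mk, h]
  have h := lift_increment_eq_of_homotopy φ hφ (u := id) (v := fun s => (F (s, 0)).1)
    continuous_id (by fun_prop) (fun s => by simp [φ, hH₀, hprj]) fun s => by
      simp only [φ, ContinuousMap.coe_mk, hH₁]
      exact (Prod.ext_iff.1 (hlift (s, 0))).1.symm
  simpa using h.symm

lemma IsotopicToId.lift_Tr_one (hiso : IsotopicToId f) (hlift : IsLift f F) (z : Plane) :
    F (Tr 1 z) = Tr 1 (F z) := by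
  have hprj (w : Plane) : prj (F (Tr 1 w)) = prj (F w) := by rw [hlift, hlift, prj_Tr]
  have hconst := sub_eq_sub_of_addCircle_coe_eq (u := fun w => (F (Tr 1 w)).1)
    (v := fun w => (F w).1) (F.continuous.comp (show Continuous (Tr 1) by unfold Tr; fun_prop)).fst
    (by fun_prop) (fun w => congr_arg Prod.fst (hprj w)) z (0, 0)
  have hone := hiso.lift_one_sub_lift_zero hlift
  simp only [show Tr 1 (0, 0) = (1, 0) by simp [Tr], hone] at hconst
  have hsnd : (F (Tr 1 z)).2 = (F z).2 := (Prod.ext_iff.1 (hprj z)).2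
  refine Prod.ext ?_ hsnd
  simpa [Tr] using eq_add_of_sub_eq' hconst

end Isotopy

theorem line_translation_generalization_weak_general
    (f : Ann ≃ₜ Ann) (F : Plane ≃ₜ Plane)
    (hcomm : ∀ z, F (Tr 1 z) = Tr 1 (F z)) (hlift : IsLift f F)
    (p p' : ℤ) (q q' : ℕ) (hq : 0 < q) (hq' : 0 < q')
    (hFarey : (q : ℤ) * p' - p * q' = 1)
    (hsub : RotWeak ⇑F ⊆
      Set.Ioo ((((p : ℝ) / (q : ℝ) : ℝ)) : EReal) ((((p' : ℝ) / (q' : ℝ) : ℝ)) : EReal)) :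
    ∃ Γ : ℝ → Plane, IsEssLinePlane Γ ∧ IsEssLineAnn (prj ∘ Γ) ∧
      (∀ i ∈ Finset.range (q + q'), ∀ j ∈ Finset.range (q + q'), i ≠ j →
        Disjoint ((⇑f)^[i] '' Set.range (prj ∘ Γ)) ((⇑f)^[j] '' Set.range (prj ∘ Γ))) ∧
      (∀ ρ ∈ Set.Ioo ((p : ℝ) / (q : ℝ)) ((p' : ℝ) / (q' : ℝ)),
        ∀ i ∈ Finset.range (q + q'), ∀ j ∈ Finset.range (q + q'), ∀ k : ℤ,
          ((i : ℝ) * ρ + (k : ℝ) < (j : ℝ) * ρ ↔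
            lineLT (Tr k '' ((⇑F)^[i] '' Set.range Γ)) ((⇑F)^[j] '' Set.range Γ))) := by
  have hF : Commute F shift := commute_shift_iff.2 hcomm
  obtain ⟨G, Γ, hG, hΓ, hrange, htrap⟩ := (isProperAction_fareyAction hF hq hq' hFarey
    hsub).exists_trapped_isEssLinePlane (m₀ := (q', q)) (by simp [hq.ne'])
      (fareyAction_swap_eq_shift hFarey)
  have hdisj (k : ℕ × ℕ) (hk : k ≠ 0) :
      Disjoint (range Γ) (fareyAction F p p' q q' k '' range Γ) :=
    hrange ▸ disjoint_zeroSet_image (htrap k hk)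
  have hlt (k : ℕ × ℕ) (hk : k ≠ 0) :
      lineLT (range Γ) (fareyAction F p p' q q' k '' range Γ) :=
    hrange ▸ hG.lineLT_image_zeroSet (commute_fareyAction_shift hF k) (htrap k hk)
  refine ⟨Γ, hΓ, isEssLineAnn_prj_comp hΓ fun k hk => ?_, fun i hi j hj hij => ?_,
    fun ρ hρ i hi j hj k => (lineLT_Tr_image_iterate_image_iff hF hq hq' hFarey
      (hrange ▸ hG.compl_zeroSet_mem_horizontalEnd) (hrange ▸ hG.not_lineLT_zeroSet_self) hlt hρ
      (Finset.mem_range.1 hi) (Finset.mem_range.1 hj) k).symm⟩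
  · simpa [← funext (shift_zpow_apply k)] using
      disjoint_zpow_mul_shift_zpow_image (n := 0) hF hFarey hdisj (by rw [abs_zero]; positivity)
        (.inr hk)
  · rw [range_comp]
    exact disjoint_iterate_image_prj_image hlift hF hFarey hdisj (Finset.mem_range.1 hi)
      (Finset.mem_range.1 hj) hij

/-- Theorem 5.5 (line translation theorem, weak rotation set version): if `Rot_weak(F)` is
contained in the Farey interval ]p/q, p'/q'[, then there is an essential line `γ = prj ∘ Γ`
in 𝔸 whose first `q+q'-1` iterates under `f` are pairwise disjoint and ordered as the
corresponding iterates of a vertical line under the rigid rotation of angle `ρ`, for any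
`ρ` in the Farey interval. -/
theorem line_translation_generalization_weak
    (f : Ann ≃ₜ Ann) (F : Plane ≃ₜ Plane)
    (hiso : IsotopicToId f) (hint : IntersectionProperty f) (hlift : IsLift f F)
    (p p' : ℤ) (q q' : ℕ) (hq : 0 < q) (hq' : 0 < q')
    (hFarey : (q : ℤ) * p' - p * q' = 1)
    (hsub : RotWeak ⇑F ⊆
      Set.Ioo ((((p : ℝ) / (q : ℝ) : ℝ)) : EReal) ((((p' : ℝ) / (q' : ℝ) : ℝ)) : EReal)) :
    ∃ Γ : ℝ → Plane, IsEssLinePlane Γ ∧ IsEssLineAnn (prj ∘ Γ) ∧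
      (∀ i ∈ Finset.range (q + q'), ∀ j ∈ Finset.range (q + q'), i ≠ j →
        Disjoint ((⇑f)^[i] '' Set.range (prj ∘ Γ)) ((⇑f)^[j] '' Set.range (prj ∘ Γ))) ∧
      (∀ ρ ∈ Set.Ioo ((p : ℝ) / (q : ℝ)) ((p' : ℝ) / (q' : ℝ)),
        ∀ i ∈ Finset.range (q + q'), ∀ j ∈ Finset.range (q + q'), ∀ k : ℤ,
          ((i : ℝ) * ρ + (k : ℝ) < (j : ℝ) * ρ ↔
            lineLT (Tr k '' ((⇑F)^[i] '' Set.range Γ)) ((⇑F)^[j] '' Set.range Γ))) :=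
  line_translation_generalization_weak_general f F (hiso.lift_Tr_one hlift) hlift p p' q q' hq hq'
    hFarey hsub
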